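/- arXiv:1207.2987 — 3 statements merged into one kernel-verified Lean document; each statement's English description precedes it below -/
import Mathlib

section
/- Let l, n, d be positive integers with d ≥ n ≥ 2. Every word over an alphabet of l letters whose length is at least Ψ(n,d,l) = 4^{5+3·log_3 4} · l · (nd)^{3·log_3(nd) + 5 + 6·log_3 4} · d^2 either contains a subword of the form u^d (a d-th power of a nonempty word) or is n-divisible. -/
/-- `W` is `n`-divisible. -/
def IsNDivisible {α : Type*} [LinearOrder α] (n : ℕ) (W : List α) : Prop :=
  ∃ (v : List α) (us : List (List α)), us.length = n ∧ (∀ u ∈ us, u ≠ []) ∧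
    W = v ++ us.flatten ∧ us.Chain' (fun a b => b < a)

/-!
Let `W` have no `d`-th power and not be `n`-divisible, and put `K = n * d`.

Among `d + 1` positions with decreasing suffixes, either the word between the first and the last
exceeds the last suffix, or all these positions start the same long factor, and the shortest gap
is a period producing a `d`-th power. So a chain of `K + 1` positions with decreasing suffixes
would make `W` `n`-divisible, and by the dual of Dilworth's theorem the positions can be coloured
with `K` colours so that suffixes of one colour increase along `W`.

If the pair (colour, factor of length `a`) takes at most `P` values, cut `W` into phases at the
positions where a new value appears. Inside a phase the colour determines the factor of length
`a`, by monotonicity. A factor of length `3 * a` is made of three factors of length `a`, so it is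
determined by three colours and three phase numbers; as the latter grow with the position, only
their sum matters. Hence tripling the length multiplies the number of phases by `3 * K ^ 3` only.
Once `K ≤ a`, a phase has at most `K` factors of length `a`, so as in the Morse–Hedlund theorem a
long phase is periodic and contains a `d`-th power. This bounds the length of every phase.
-/

section Pigeonhole

lemma exists_succ_le_of_lt_add {s : ℕ → ℕ} {a : ℕ} (h : s a < s 0 + a) :
    ∃ m < a, s (m + 1) ≤ s m := by
  by_contra! hs
  have growth : ∀ m ≤ a, s 0 + m ≤ s m := by
    intro m
    induction m with
    | zero => simp
    | succ m ih => intro hm; have := ih (by omega); have := hs m hm; omega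
  exact (growth a le_rfl).not_gt h

lemma exists_mul_step_le_sub {R : Type*} [Ring R] [LinearOrder R] [IsOrderedRing R] (g : ℕ → R)
    {d : ℕ} (hd : 0 < d) :
    ∃ s < d, d * (g (s + 1) - g s) ≤ g d - g 0 := by
  have hsum : ∑ s ∈ Finset.range d, d * (g (s + 1) - g s) ≤
      ∑ _s ∈ Finset.range d, (g d - g 0) := by
    rw [← Finset.mul_sum, Finset.sum_range_sub, Finset.sum_const, Finset.card_range, nsmul_eq_mul]
  simpa using Finset.exists_le_of_sum_le (Finset.nonempty_range_iff.mpr hd.ne') hsum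

lemma ncard_image_le_card_of_determines {ι β κ : Type*} [Fintype κ] {S : Set ι} {c : ι → κ}
    {f : ι → β} (h : ∀ i ∈ S, ∀ j ∈ S, c i = c j → f i = f j) :
    (f '' S).ncard ≤ Fintype.card κ := by
  choose r hrS hr using fun y : f '' S => y.2
  have hinj : Function.Injective (c ∘ r) := fun y z hyz => by
    rw [Subtype.ext_iff, ← hr y, ← hr z, h _ (hrS y) _ (hrS z) hyz]
  simpa [Set.ncard_def] using Nat.card_le_card_of_injective _ hinj

lemma exists_lt_map_eq_le_add_card {κ : Type*} [Fintype κ] (c : ℕ → κ) (s : ℕ) :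
    ∃ i j, s ≤ i ∧ i < j ∧ j ≤ s + Fintype.card κ ∧ c i = c j := by
  obtain ⟨x, y, hxy, hc⟩ := Fintype.exists_ne_map_eq_of_card_lt
    (fun x : Fin (Fintype.card κ + 1) => c (s + x)) (by simp)
  rcases hxy.lt_or_gt with h | h
  · exact ⟨s + x, s + y, by omega, by omega, by omega, hc⟩
  · exact ⟨s + y, s + x, by omega, by omega, by omega, hc.symm⟩

end Pigeonhole

section LexOrder

variable {α : Type*} [LinearOrder α]

lemma list_le_of_prefix {x y : List α} (h : x <+: y) : x ≤ y :=
  not_lt.mp h.le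

lemma list_take_monotone (a : ℕ) : Monotone (List.take a : List α → List α) := by
  intro x y hxy
  contrapose! hxy
  induction a generalizing x y with
  | zero => simp at hxy
  | succ a ih =>
    rcases x with _ | ⟨p, x⟩ <;> rcases y with _ | ⟨q, y⟩
    · simp at hxy
    · simp at hxy
    · exact List.nil_lt_cons _ _
    · simp only [List.take_succ_cons, List.cons_lt_cons_iff] at hxy ⊢
      exact hxy.imp_right (And.imp_right fun h => ih h)

lemma lt_length_of_lt_drop {W x : List α} {i : ℕ} (h : x < W.drop i) : i < W.length := by
  by_contra! hi
  rw [List.drop_eq_nil_of_le hi] at h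
  exact List.not_lt_nil x h

end LexOrder

section Factor

variable {α : Type*} {W : List α} {i j a b d : ℕ}

/-- The factor (contiguous subword) of length `a` of `W` that starts at the position `i`, counted
from zero. It is shorter than `a` if it reaches the end of `W`. -/
def factor (W : List α) (i a : ℕ) : List α :=
  (W.drop i).take a

/-- `W` is `d`-power-free if no factor of `W` is the `d`-th power of a nonempty word. -/
def IsPowerFree (d : ℕ) (W : List α) : Prop :=
  ∀ u : List α, u ≠ [] → ¬ (List.replicate d u).flatten <:+: W

lemma factor_add (W : List α) (i a b : ℕ) :
    factor W i (a + b) = factor W i a ++ factor W (i + a) b := by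
  rw [factor, List.take_add, List.drop_drop, factor, factor]

lemma take_factor (hab : a ≤ b) (W : List α) (i : ℕ) : (factor W i b).take a = factor W i a := by
  rw [factor, List.take_take, min_eq_left hab, factor]

lemma drop_factor (W : List α) (i a b : ℕ) :
    (factor W i (a + b)).drop a = factor W (i + a) b := by
  rw [factor, List.drop_take, List.drop_drop, Nat.add_sub_cancel_left, factor]

lemma factor_append_drop (hij : i ≤ j) : factor W i (j - i) ++ W.drop j = W.drop i := by
  conv_lhs => rw [← Nat.add_sub_cancel' hij, ← List.drop_drop, Nat.add_sub_cancel_left]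
  exact List.take_append_drop _ _

lemma factor_eq_of_le (hab : a ≤ b) (h : factor W i b = factor W j b) :
    factor W i a = factor W j a := by
  rw [← take_factor hab, h, take_factor hab]

lemma factor_ne_nil (hi : i < W.length) (ha : 0 < a) : factor W i a ≠ [] := by
  simp [factor, List.take_eq_nil_iff, hi, ha.ne']

lemma flatten_replicate_factor {r G : ℕ} (h : factor W i G = factor W (i + r) G) :
    ∀ m, m * r ≤ G + r → (List.replicate m (factor W i r)).flatten = factor W i (m * r)
  | 0, _ => by simp [factor]
  | m + 1, hm => by
    have hmG : m * r ≤ G := by rw [Nat.succ_mul] at hm; omega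
    rw [List.replicate_succ, List.flatten_cons, flatten_replicate_factor h m (by omega),
      factor_eq_of_le hmG h, ← factor_add, Nat.succ_mul, Nat.add_comm]

lemma not_isPowerFree_of_factor_eq {r G : ℕ} (hi : i < W.length) (hr : 0 < r) (hG : d * r ≤ G)
    (h : factor W i G = factor W (i + r) G) : ¬ IsPowerFree d W := by
  intro hW
  refine hW (factor W i r) (factor_ne_nil hi hr) ?_
  rw [flatten_replicate_factor h d (by omega)]
  exact (List.take_prefix _ _).isInfix.trans (List.drop_suffix _ _).isInfix

end Factor

section DescentChain

variable {ι β : Type*}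

/-- The points `g 0 < g 1 < ⋯ < g k` form a descent chain of `f`, that is,
`f (g 0) > f (g 1) > ⋯ > f (g k)`. The values of `g` beyond `k` are irrelevant. -/
structure IsDescentChain [Preorder ι] [Preorder β] (f : ι → β) (g : ℕ → ι) (k : ℕ) : Prop where
  strictMonoOn : StrictMonoOn g (Set.Iic k)
  strictAntiOn : StrictAntiOn (f ∘ g) (Set.Iic k)

lemma strictMonoOn_update_succ [Preorder ι] {g : ℕ → ι} {k : ℕ} {j : ι}
    (hg : StrictMonoOn g (Set.Iic k)) (hj : g k < j) :
    StrictMonoOn (Function.update g (k + 1) j) (Set.Iic (k + 1)) := by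
  refine strictMonoOn_of_lt_add_one Set.ordConnected_Iic fun s _ _ hs => ?_
  have hsk : s ≤ k := Nat.le_of_succ_le_succ hs
  rw [Function.update_of_ne (by omega)]
  rcases hsk.eq_or_lt with rfl | hlt
  · rwa [Function.update_self]
  · rw [Function.update_of_ne (by omega)]
    exact hg hsk hlt s.lt_succ_self

namespace IsDescentChain

variable [Preorder ι] [Preorder β] {f : ι → β} {g : ℕ → ι} {k : ℕ}

lemma const (f : ι → β) (i : ι) : IsDescentChain f (fun _ => i) 0 := by
  constructor <;> intro s hs t ht hst <;> simp_all

lemma snoc {j : ι} (h : IsDescentChain f g k) (hj : g k < j) (hf : f j < f (g k)) :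
    IsDescentChain f (Function.update g (k + 1) j) (k + 1) where
  strictMonoOn := strictMonoOn_update_succ h.strictMonoOn hj
  strictAntiOn := by
    rw [Function.comp_update]
    exact strictMonoOn_update_succ (ι := βᵒᵈ) h.strictAntiOn hf

lemma shift {m b : ℕ} (h : IsDescentChain f g k) (hk : b + m ≤ k) :
    IsDescentChain f (fun s => g (b + s)) m where
  strictMonoOn _ hs _ ht hst :=
    h.strictMonoOn ((Nat.add_le_add_left hs b).trans hk) ((Nat.add_le_add_left ht b).trans hk)
      (Nat.add_lt_add_left hst b)
  strictAntiOn _ hs _ ht hst :=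
    h.strictAntiOn ((Nat.add_le_add_left hs b).trans hk) ((Nat.add_le_add_left ht b).trans hk)
      (Nat.add_lt_add_left hst b)

end IsDescentChain

-- The colour of `i` is the length of the longest descent chain ending at `i`.
lemma exists_coloring_monotoneOn [PartialOrder ι] [LinearOrder β] {f : ι → β} {K : ℕ}
    (hf : ∀ g, ¬ IsDescentChain f g K) :
    ∃ c : ι → Fin K, ∀ k, MonotoneOn f (c ⁻¹' {k}) := by
  classical
  let EndsAt (i : ι) (k : ℕ) : Prop := ∃ g, IsDescentChain f g k ∧ g k = i
  let level (i : ι) : ℕ := Nat.findGreatest (EndsAt i) K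
  have endsAt_level (i : ι) : EndsAt i (level i) :=
    Nat.findGreatest_spec (Nat.zero_le K) ⟨_, IsDescentChain.const f i, rfl⟩
  have level_lt (i : ι) : level i < K := by
    obtain ⟨g, hg, -⟩ := endsAt_level i
    exact (Nat.findGreatest_le K).lt_of_ne fun h => hf g (h ▸ hg)
  have level_lt_level {i j : ι} (hij : i < j) (hfij : f j < f i) : level i < level j := by
    obtain ⟨g, hg, hgi⟩ := endsAt_level i
    have hchain := hg.snoc (hgi.symm ▸ hij) (hgi.symm ▸ hfij)
    exact Nat.le_findGreatest (level_lt i) ⟨_, hchain, Function.update_self ..⟩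
  refine ⟨fun i => ⟨level i, level_lt i⟩, fun k i hi j hj hij => ?_⟩
  by_contra! hfij
  have hlt : i < j := hij.lt_of_ne fun h => (h ▸ hfij).false
  exact (level_lt_level hlt hfij).ne (congrArg Fin.val (hi.trans hj.symm))

end DescentChain

section Divisibility

variable {α : Type*} [LinearOrder α] {W : List α} {d : ℕ}

lemma drop_lt_factor_of_isDescentChain {g : ℕ → ℕ} (hd : 0 < d) (hW : IsPowerFree d W)
    (hg : IsDescentChain (W.drop ·) g d) :
    W.drop (g d) < factor W (g 0) (g d - g 0) := by
  by_contra! hle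
  set G := g d - g 0 with hG
  have factor_eq (s : ℕ) (hs : s ≤ d) : factor W (g s) G = factor W (g 0) G := by
    apply le_antisymm
    · exact list_take_monotone G (hg.strictAntiOn.antitoneOn d.zero_le hs s.zero_le)
    · calc factor W (g 0) G = (factor W (g 0) G).take G := (take_factor le_rfl W _).symm
        _ ≤ factor W (g s) G := list_take_monotone G
          (hle.trans (hg.strictAntiOn.antitoneOn hs Set.self_mem_Iic hs))
  obtain ⟨s, hs, hstep⟩ := exists_mul_step_le_sub (fun s => (g s : ℤ)) hd
  have hlt : g s < g (s + 1) := hg.strictMonoOn hs.le hs s.lt_succ_self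
  have hgd : g 0 < g d := hg.strictMonoOn d.zero_le Set.self_mem_Iic hd
  have hsuffix : W.drop (g (s + 1)) < W.drop (g s) := hg.strictAntiOn hs.le hs s.lt_succ_self
  refine not_isPowerFree_of_factor_eq (r := g (s + 1) - g s) (G := G)
    (lt_length_of_lt_drop hsuffix) (by omega) ?_ ?_ hW
  · zify [hlt.le, hgd.le, hG]
    exact hstep
  · rw [Nat.add_sub_cancel' hlt.le, factor_eq s hs.le, factor_eq (s + 1) hs]

lemma exists_decreasing_factorization {h : ℕ → ℕ} {m : ℕ} (hlt : ∀ t < m, h t < h (t + 1))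
    (hfac : ∀ t < m, W.drop (h (t + 1)) < factor W (h t) (h (t + 1) - h t))
    (hm : h m < W.length) :
    ∃ us : List (List α), us.length = m + 1 ∧ (∀ u ∈ us, u ≠ []) ∧
      us.flatten = W.drop (h 0) ∧ us.IsChain (fun a b => b < a) := by
  induction m generalizing h with
  | zero => exact ⟨[W.drop (h 0)], by simpa using hm⟩
  | succ m ih =>
    obtain ⟨us, hlen, hne, hflat, hchain⟩ := ih (h := fun t => h (t + 1))
      (fun t ht => hlt (t + 1) (by omega)) (fun t ht => hfac (t + 1) (by omega)) hm
    have h01 := hlt 0 m.succ_pos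
    have hfac0 := hfac 0 m.succ_pos
    refine ⟨factor W (h 0) (h 1 - h 0) :: us, by simp [hlen], ?_, ?_, ?_⟩
    · exact List.forall_mem_cons.mpr ⟨fun hnil => List.not_lt_nil _ (hnil ▸ hfac0), hne⟩
    · rw [List.flatten_cons, hflat, factor_append_drop h01.le]
    · refine List.isChain_cons.mpr ⟨fun u hu => ?_, hchain⟩
      have hprefix : u <+: W.drop (h 1) := by
        obtain ⟨vs, rfl⟩ := List.head?_eq_some_iff.mp hu
        exact ⟨vs.flatten, by simpa using hflat⟩
      exact (list_le_of_prefix hprefix).trans_lt hfac0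

lemma isNDivisible_of_isDescentChain {n : ℕ} {g : ℕ → ℕ} (hd : 0 < d) (hW : IsPowerFree d W)
    (hg : IsDescentChain (W.drop ·) g (n * d)) : IsNDivisible n W := by
  rcases n with _ | m
  · exact ⟨W, [], rfl, by simp, by simp, List.isChain_nil⟩
  have block (t : ℕ) (ht : t < m + 1) : IsDescentChain (W.drop ·) (fun s => g (t * d + s)) d :=
    hg.shift (by rw [← Nat.succ_mul]; exact Nat.mul_le_mul_right d ht)
  have hlt (t : ℕ) (ht : t < m) : g (t * d) < g ((t + 1) * d) := by
    simpa [Nat.succ_mul] using (block t (by omega)).strictMonoOn d.zero_le Set.self_mem_Iic hd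
  have hfac (t : ℕ) (ht : t < m) : W.drop (g ((t + 1) * d)) <
      factor W (g (t * d)) (g ((t + 1) * d) - g (t * d)) := by
    simpa [Nat.succ_mul] using drop_lt_factor_of_isDescentChain hd hW (block t (by omega))
  have hlast : g (m * d) < W.length :=
    lt_length_of_lt_drop ((block m m.lt_succ_self).strictAntiOn d.zero_le Set.self_mem_Iic hd)
  obtain ⟨us, hlen, hne, hflat, hchain⟩ := exists_decreasing_factorization
    (h := fun t => g (t * d)) hlt hfac hlast
  exact ⟨W.take (g (0 * d)), us, hlen, hne, by rw [hflat, List.take_append_drop], hchain⟩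

lemma exists_coloring_monotoneOn_drop {n : ℕ} (hd : 0 < d) (hW : IsPowerFree d W)
    (hdiv : ¬ IsNDivisible n W) :
    ∃ c : ℕ → Fin (n * d), ∀ k, MonotoneOn (W.drop ·) (c ⁻¹' {k}) :=
  exists_coloring_monotoneOn fun _ hg => hdiv (isNDivisible_of_isDescentChain hd hW hg)

end Divisibility

section Phases

variable {κ : Type*}

/-- `ℕ` can be cut into at most `P` consecutive phases so that inside each of them the colour `c i`
determines the value `u i`. The phase containing `i` is numbered `t i`. -/
def HasPhases {β : Type*} (c : ℕ → κ) (u : ℕ → β) (P : ℕ) : Prop :=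
  ∃ t : ℕ → ℕ, Monotone t ∧ (∀ i, t i < P) ∧ ∀ i j, c i = c j → t i = t j → u i = u j

-- A new phase starts wherever `q` takes a value for the first time.
lemma hasPhases_of_factorsThrough {β γ : Type*} [PartialOrder β] [Fintype γ] {c : ℕ → κ}
    {u : ℕ → β} {q : ℕ → γ} (hu : ∀ k, MonotoneOn u (c ⁻¹' {k}))
    (hcq : c.FactorsThrough q) (huq : u.FactorsThrough q) :
    HasPhases c u (Fintype.card γ) := by
  classical
  let seen (i : ℕ) : Finset γ := (Finset.range (i + 1)).image q
  have seen_mono : Monotone seen := fun i j hij =>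
    Finset.image_subset_image (Finset.range_mono (by omega))
  have seen_pos (i : ℕ) : 0 < (seen i).card :=
    Finset.card_pos.mpr ((Finset.nonempty_range_add_one).image q)
  have eq_of_le {i j : ℕ} (hij : i ≤ j) (hc : c i = c j)
      (ht : (seen j).card ≤ (seen i).card) : u i = u j := by
    have hmem : q j ∈ seen i := by
      rw [Finset.eq_of_subset_of_card_le (seen_mono hij) ht]
      exact Finset.mem_image_of_mem q (Finset.self_mem_range_succ j)
    obtain ⟨x, hx, hxj⟩ := Finset.mem_image.mp hmem
    apply le_antisymm (hu (c j) hc rfl hij)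
    rw [← huq hxj]
    exact hu (c j) (hcq hxj) hc (Nat.lt_succ_iff.mp (Finset.mem_range.mp hx))
  refine ⟨fun i => (seen i).card - 1, fun i j hij => ?_, fun i => ?_, fun i j hc ht => ?_⟩
  · exact Nat.sub_le_sub_right (Finset.card_le_card (seen_mono hij)) 1
  · exact (Nat.sub_lt (seen_pos i) one_pos).trans_le (seen i).card_le_univ
  · have hcard : (seen i).card = (seen j).card := by
      have := seen_pos i; have := seen_pos j; dsimp only at ht; omega
    rcases le_total i j with hij | hji
    · exact eq_of_le hij hc hcard.ge
    · exact (eq_of_le hji hc.symm hcard.le).symm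

variable {α : Type*} [LinearOrder α] [Fintype κ] {W : List α} {c : ℕ → κ}

lemma monotoneOn_factor {S : Set ℕ} (hS : MonotoneOn (W.drop ·) S) (a : ℕ) :
    MonotoneOn (factor W · a) S :=
  (list_take_monotone a).comp_monotoneOn hS

lemma hasPhases_factor_one [Fintype α] (hc : ∀ k, MonotoneOn (W.drop ·) (c ⁻¹' {k})) :
    HasPhases c (factor W · 1) (Fintype.card κ * (Fintype.card α + 1)) := by
  let q (i : ℕ) : κ × Option α := (c i, (W.drop i).head?)
  have huq : (factor W · 1).FactorsThrough q := fun i j hij => by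
    simp only [factor, List.take_one, show (W.drop i).head? = (W.drop j).head? from
      congrArg Prod.snd hij]
  have := hasPhases_of_factorsThrough (fun k => monotoneOn_factor (hc k) 1)
    (fun i j hij => congrArg Prod.fst hij) huq
  simpa using this

lemma eq_of_add_add_eq_of_monotone {t : ℕ → ℕ} (ht : Monotone t) {i j a b : ℕ}
    (h : t i + t (i + a) + t (i + b) = t j + t (j + a) + t (j + b)) :
    t i = t j ∧ t (i + a) = t (j + a) ∧ t (i + b) = t (j + b) := by
  rcases le_total i j with hij | hji
  · have := ht hij
    have := ht (Nat.add_le_add_right hij a)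
    have := ht (Nat.add_le_add_right hij b)
    omega
  · have := ht hji
    have := ht (Nat.add_le_add_right hji a)
    have := ht (Nat.add_le_add_right hji b)
    omega

lemma HasPhases.factor_three_mul {a P : ℕ} (hc : ∀ k, MonotoneOn (W.drop ·) (c ⁻¹' {k}))
    (h : HasPhases c (factor W · a) P) :
    HasPhases c (factor W · (3 * a)) (3 * Fintype.card κ ^ 3 * P) := by
  obtain ⟨t, ht, htP, hfac⟩ := h
  have sum_lt (i : ℕ) : t i + t (i + a) + t (i + 2 * a) < 3 * P := by
    have := htP i; have := htP (i + a); have := htP (i + 2 * a); omega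
  have factor_split (i : ℕ) : factor W i (3 * a) =
      factor W i a ++ factor W (i + a) a ++ factor W (i + 2 * a) a := by
    rw [← factor_add, ← two_mul, ← factor_add, ← Nat.succ_mul]
  let q (i : ℕ) : κ × κ × κ × Fin (3 * P) :=
    (c i, c (i + a), c (i + 2 * a), ⟨t i + t (i + a) + t (i + 2 * a), sum_lt i⟩)
  have huq : (factor W · (3 * a)).FactorsThrough q := by
    intro i j hij
    simp only [q, Prod.mk.injEq, Fin.mk.injEq] at hij
    obtain ⟨hc₀, hc₁, hc₂, hsum⟩ := hij
    obtain ⟨ht₀, ht₁, ht₂⟩ := eq_of_add_add_eq_of_monotone ht hsum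
    simp only [factor_split, hfac _ _ hc₀ ht₀, hfac _ _ hc₁ ht₁, hfac _ _ hc₂ ht₂]
  have := hasPhases_of_factorsThrough (fun k => monotoneOn_factor (hc k) (3 * a))
    (fun i j hij => congrArg Prod.fst hij) huq
  convert this using 1
  simp only [Fintype.card_prod, Fintype.card_fin]
  ring

lemma hasPhases_factor_three_pow [Fintype α] (hc : ∀ k, MonotoneOn (W.drop ·) (c ⁻¹' {k}))
    (k : ℕ) :
    HasPhases c (factor W · (3 ^ k))
      ((3 * Fintype.card κ ^ 3) ^ k * (Fintype.card κ * (Fintype.card α + 1))) := by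
  induction k with
  | zero => simpa using hasPhases_factor_one hc
  | succ k ih =>
    rw [pow_succ', pow_succ', mul_assoc]
    exact ih.factor_three_mul hc

end Phases

section LongPhase

variable {α κ : Type*} [Fintype κ] {W : List α} {c : ℕ → κ} {a d : ℕ}

-- Otherwise each longer length would distinguish more positions of `S`, up to more than `a`.
lemma exists_factor_determines_succ {S : Finset ℕ} (hS : S.Nonempty)
    (hcard : ((factor W · a) '' (S : Set ℕ)).ncard ≤ a) :
    ∃ m < a, ∀ i ∈ S, ∀ j ∈ S,
      factor W i m = factor W j m → factor W i (m + 1) = factor W j (m + 1) := by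
  classical
  let F (m : ℕ) : Finset (List α) := S.image (factor W · m)
  have card_F_zero : 0 < (F 0).card := Finset.card_pos.mpr (hS.image _)
  have card_F_a : (F a).card ≤ a := by
    rwa [← Finset.coe_image, Set.ncard_coe_finset] at hcard
  obtain ⟨m, hm, hF⟩ := exists_succ_le_of_lt_add (s := fun m => (F m).card) (a := a) (by omega)
  have image_take : (F (m + 1)).image (List.take m) = F m := by
    simp only [F, Finset.image_image, Function.comp_def, take_factor m.le_succ]
  have take_injOn : Set.InjOn (List.take m) (F (m + 1) : Set (List α)) :=
    Finset.injOn_of_card_image_eq (le_antisymm Finset.card_image_le (image_take ▸ hF))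
  refine ⟨m, hm, fun i hi j hj hij => take_injOn ?_ ?_ ?_⟩
  · exact Finset.mem_coe.mpr (Finset.mem_image_of_mem _ hi)
  · exact Finset.mem_coe.mpr (Finset.mem_image_of_mem _ hj)
  · simpa only [take_factor m.le_succ] using hij

lemma factor_eq_of_determines_succ {s e m : ℕ}
    (hdet : ∀ i ∈ Finset.Ico s e, ∀ j ∈ Finset.Ico s e,
      factor W i m = factor W j m → factor W i (m + 1) = factor W j (m + 1))
    {T i j : ℕ} (hi : s ≤ i) (hij : i ≤ j) (hj : j + T ≤ e) (h : factor W i m = factor W j m) :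
    factor W i T = factor W j T := by
  induction T generalizing i j with
  | zero => simp [factor]
  | succ T ih =>
    have hsucc : factor W i (1 + m) = factor W j (1 + m) := by
      rw [Nat.add_comm]
      exact hdet i (Finset.mem_Ico.mpr (by omega)) j (Finset.mem_Ico.mpr (by omega)) h
    have hletter : factor W i 1 = factor W j 1 := factor_eq_of_le (by omega) hsucc
    have hnext : factor W (i + 1) m = factor W (j + 1) m := by
      rw [← drop_factor, hsucc, drop_factor]
    rw [Nat.add_comm T, factor_add, factor_add, hletter,
      ih (by omega) (by omega) (by omega) hnext]

lemma not_isPowerFree_of_color_determines_factor (hd : 0 < d) (ha : Fintype.card κ ≤ a) {s : ℕ}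
    (hs : s + (d + 1) * Fintype.card κ ≤ W.length)
    (hdet : ∀ i ∈ Finset.Ico s (s + (d + 1) * Fintype.card κ),
      ∀ j ∈ Finset.Ico s (s + (d + 1) * Fintype.card κ), c i = c j → factor W i a = factor W j a) :
    ¬ IsPowerFree d W := by
  set K := Fintype.card κ
  have hdK : K ≤ d * K := Nat.le_mul_of_pos_left K hd
  have hsplit : (d + 1) * K = d * K + K := Nat.succ_mul d K
  have hfew : ((factor W · a) '' (Finset.Ico s (s + (d + 1) * K) : Set ℕ)).ncard ≤ a :=
    (ncard_image_le_card_of_determines hdet).trans ha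
  obtain ⟨i, j, hsi, hij, hjs, hc⟩ := exists_lt_map_eq_le_add_card c s
  obtain ⟨m, hma, hsucc⟩ := exists_factor_determines_succ (Finset.nonempty_Ico.mpr (by omega)) hfew
  have hm : factor W i m = factor W j m := factor_eq_of_le hma.le
    (hdet i (Finset.mem_Ico.mpr (by omega)) j (Finset.mem_Ico.mpr (by omega)) hc)
  have hlong : factor W i (d * K) = factor W (i + (j - i)) (d * K) := by
    rw [Nat.add_sub_cancel' hij.le]
    exact factor_eq_of_determines_succ hsucc hsi hij.le (by omega) hm
  exact not_isPowerFree_of_factor_eq (by omega) (by omega)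
    (Nat.mul_le_mul_left d (by omega)) hlong

lemma length_lt_of_hasPhases {P : ℕ} (hd : 0 < d) (hW : IsPowerFree d W)
    (ha : Fintype.card κ ≤ a) (h : HasPhases c (factor W · a) P) :
    W.length < P * ((d + 1) * Fintype.card κ) := by
  obtain ⟨t, ht, htP, hfac⟩ := h
  by_contra! hlen
  set B := (d + 1) * Fintype.card κ
  obtain ⟨m, hm, htm⟩ := exists_succ_le_of_lt_add (s := fun m => t (m * B)) (a := P)
    ((htP _).trans_le (Nat.le_add_left _ _))
  have hmB : m * B + B = (m + 1) * B := (Nat.succ_mul m B).symm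
  have t_eq {i : ℕ} (hi : i ∈ Finset.Ico (m * B) (m * B + B)) : t i = t (m * B) := by
    rw [Finset.mem_Ico, hmB] at hi
    exact le_antisymm ((ht hi.2.le).trans htm) (ht hi.1)
  refine not_isPowerFree_of_color_determines_factor (c := c) hd ha (s := m * B) ?_ ?_ hW
  · exact (hmB.trans_le (Nat.mul_le_mul_right B hm)).trans hlen
  · exact fun i hi j hj hij => hfac i j hij ((t_eq hi).trans (t_eq hj).symm)

end LongPhase

section Bound

lemma length_lt_of_isPowerFree_of_not_isNDivisible {α : Type*} [LinearOrder α] [Fintype α]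
    {n d : ℕ} {W : List α} (hd : 0 < d) (hW : IsPowerFree d W) (hdiv : ¬ IsNDivisible n W) :
    W.length < (3 * (n * d) ^ 3) ^ Nat.clog 3 (n * d) * (n * d * (Fintype.card α + 1)) *
      ((d + 1) * (n * d)) := by
  obtain ⟨c, hc⟩ := exists_coloring_monotoneOn_drop hd hW hdiv
  have hphases := hasPhases_factor_three_pow hc (Nat.clog 3 (n * d))
  have hlong : Fintype.card (Fin (n * d)) ≤ 3 ^ Nat.clog 3 (n * d) := by
    simpa using Nat.le_pow_clog (by norm_num) (n * d)
  simpa only [Fintype.card_fin] using length_lt_of_hasPhases hd hW hlong hphases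

open Real

lemma three_mul_cube_pow_clog_le {K : ℕ} (hK : 0 < K) :
    (3 * (K : ℝ) ^ 3) ^ Nat.clog 3 K ≤ 3 * (K : ℝ) ^ (3 * logb 3 K + 4) := by
  have hK1 : (1 : ℝ) ≤ K := by exact_mod_cast hK
  have hK0 : (0 : ℝ) < K := by positivity
  have hclog : (Nat.clog 3 K : ℝ) ≤ logb 3 K + 1 := by
    have hceil := Nat.ceil_lt_add_one (logb_nonneg (by norm_num : (1 : ℝ) < 3) hK1)
    exact_mod_cast (natCeil_logb_natCast 3 K ▸ hceil).le
  calc (3 * (K : ℝ) ^ 3) ^ Nat.clog 3 K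
      = (3 : ℝ) ^ (Nat.clog 3 K : ℝ) * (K : ℝ) ^ (3 * (Nat.clog 3 K : ℝ)) := by
        rw [mul_pow, ← pow_mul, rpow_natCast]
        exact_mod_cast rfl
    _ ≤ (3 : ℝ) ^ (logb 3 K + 1) * (K : ℝ) ^ (3 * (logb 3 K + 1)) := by gcongr; norm_num
    _ = 3 * (K * (K : ℝ) ^ (3 * (logb 3 K + 1))) := by
        rw [rpow_add_one (by norm_num), rpow_logb (by norm_num) (by norm_num) hK0]
        ring
    _ = 3 * (K : ℝ) ^ (3 * logb 3 K + 4) := by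
        rw [show 3 * logb 3 K + 4 = 3 * (logb 3 K + 1) + 1 by ring, rpow_add_one hK0.ne',
          mul_comm (K : ℝ)]

lemma length_bound_le_psi {l d K : ℕ} (hl : 0 < l) (hd : 0 < d) (hK : 0 < K) :
    (((3 * K ^ 3) ^ Nat.clog 3 K * (K * (l + 1)) * ((d + 1) * K) : ℕ) : ℝ) ≤
      (4 : ℝ) ^ ((5 : ℝ) + 3 * logb 3 4) * l *
        (K : ℝ) ^ (3 * logb 3 K + 5 + 6 * logb 3 4) * (d : ℝ) ^ 2 := by
  have hK1 : (1 : ℝ) ≤ K := by exact_mod_cast hK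
  have hK0 : (0 : ℝ) < K := by positivity
  have hl1 : (1 : ℝ) ≤ l := by exact_mod_cast hl
  have hd1 : (1 : ℝ) ≤ d := by exact_mod_cast hd
  have hlog : 1 ≤ logb 3 4 := by
    rw [le_logb_iff_rpow_le (by norm_num) (by norm_num)]; norm_num
  have hconst : (12 : ℝ) ≤ 4 ^ (5 + 3 * logb 3 4) :=
    calc (12 : ℝ) ≤ 4 ^ (5 : ℝ) := by norm_num
      _ ≤ 4 ^ (5 + 3 * logb 3 4) := by gcongr <;> linarith
  have hpow : (K : ℝ) ^ (3 * logb 3 K + 6) ≤ (K : ℝ) ^ (3 * logb 3 K + 5 + 6 * logb 3 4) := by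
    gcongr <;> linarith
  push_cast
  calc (3 * (K : ℝ) ^ 3) ^ Nat.clog 3 K * (K * (l + 1)) * ((d + 1) * K)
      ≤ 3 * (K : ℝ) ^ (3 * logb 3 K + 4) * (K * (l + l)) * ((d * d + d * d) * K) := by
        gcongr
        · exact three_mul_cube_pow_clog_le hK
        · nlinarith
        · nlinarith
    _ = 12 * l * (K : ℝ) ^ (3 * logb 3 K + 6) * (d : ℝ) ^ 2 := by
        rw [show 3 * logb 3 K + 6 = 3 * logb 3 K + 4 + (2 : ℕ) by push_cast; ring,
          rpow_add_natCast hK0.ne']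
        ring
    _ ≤ _ := by gcongr

end Bound

theorem stmt_9_general {α : Type*} [LinearOrder α] [Fintype α] [Nonempty α] {n d : ℕ}
    (hn : 0 < n) (hd : 0 < d) (W : List α)
    (hlen : (4 : ℝ) ^ ((5 : ℝ) + 3 * Real.logb 3 4) * Fintype.card α *
        ((n * d : ℕ) : ℝ) ^ (3 * Real.logb 3 ((n * d : ℕ) : ℝ) + 5 + 6 * Real.logb 3 4) *
        (d : ℝ) ^ 2 ≤ (W.length : ℝ)) :
    (∃ u : List α, u ≠ [] ∧ (List.replicate d u).flatten <:+: W) ∨ IsNDivisible n W := by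
  by_contra! ⟨hpow, hdiv⟩
  have hshort := length_lt_of_isPowerFree_of_not_isNDivisible hd hpow hdiv
  have hbound := length_bound_le_psi (Fintype.card_pos (α := α)) hd (Nat.mul_pos hn hd)
  exact hshort.not_ge (by exact_mod_cast hbound.trans hlen)

/-- Theorem: every word over an `l`-letter alphabet of length at least
`Ψ(n,d,l) = 4^(5+3·log₃4) · l · (nd)^(3·log₃(nd)+5+6·log₃4) · d²`
contains a `d`-th power of a nonempty word or is `n`-divisible. -/
theorem stmt_9 (l n d : ℕ) (hl : 0 < l) (hn : 2 ≤ n) (hd : n ≤ d)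
    (W : List (Fin l))
    (hlen : (4 : ℝ) ^ ((5 : ℝ) + 3 * Real.logb 3 4) * l *
        ((n * d : ℕ) : ℝ) ^ (3 * Real.logb 3 ((n * d : ℕ) : ℝ) + 5 + 6 * Real.logb 3 4) *
        (d : ℝ) ^ 2 ≤ (W.length : ℝ)) :
    (∃ u : List (Fin l), u ≠ [] ∧ (List.replicate d u).flatten <:+: W) ∨
      IsNDivisible n W := by
  have : Nonempty (Fin l) := ⟨⟨0, hl⟩⟩
  exact stmt_9_general (by omega) (by omega) W (by rwa [Fintype.card_fin])
end

section
/- Let l and d be positive integers, and let A be an associative algebra generated by l elements over a field, satisfying the identity x^d = 0 (every element of A is nilpotent of index at most d). Then A is nilpotent of index less than Ψ(d,d,l) = 2^{18} · l · (d^2)^{3·log_3(d^2)+13} · d^2; that is, every product of at least Ψ(d,d,l) generators vanishes. -/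
/-!
Polarising `x ^ d = 0` gives `∑ σ, x_{σ 0} ⋯ x_{σ (d - 1)} = 0`, so the value of a word which ends
in a lexicographically decreasing product of `d` factors is a combination of values of smaller words
of the same length. By induction on the lexicographic order, a long word in the generators vanishes
as soon as all words of its length are either divisible in this sense or contain a `d`-th power.

For this dichotomy, suppose that a word over `l` letters is not `d`-divisible, and cut it into many
disjoint groups of blocks of length `k`. If every group contained `d` distinct blocks, a greedy
choice would produce decreasing blocks from `d` successive groups; hence some group has at most
`d - 1` distinct blocks. Inside such a group the blocks of length `2 * k` take at most `(d - 1) ^ 2`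
values, so the argument can be repeated, with only `O(d ^ 3)` groups needed at each doubling of the
block length. Once `k ≥ d ^ 2`, the same pigeonhole applied to the `d` shifts of a block by
`0, …, d - 1` makes two of them equal, that is, the word has a factor with period `p < d` and length
at least `d * p`. There are only logarithmically many doublings, whence the exponent.
-/

open Finset

theorem exists_strictMono_strictAnti_mem {ι β : Type*} [LinearOrder ι] [LinearOrder β] {n : ℕ}
    {G : Finset ι} {S : ι → Finset β} {F : Finset β} (hSF : ∀ g ∈ G, S g ⊆ F)
    (hS : ∀ g ∈ G, n < #(S g)) (hG : n * #F < #G) :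
    ∃ (g : Fin (n + 1) → ι) (x : Fin (n + 1) → β),
      StrictMono g ∧ StrictAnti x ∧ ∀ i, g i ∈ G ∧ x i ∈ S (g i) := by
  induction n generalizing G S with
  | zero =>
    obtain ⟨g, hg⟩ := card_pos.1 (by simpa using hG)
    obtain ⟨x, hx⟩ := card_pos.1 (hS g hg)
    exact ⟨fun _ ↦ g, fun _ ↦ x, Subsingleton.strictMono (α := Fin 1) _,
      Subsingleton.strictAnti (α := Fin 1) _, fun _ ↦ ⟨hg, hx⟩⟩
  | succ n ih =>
    have hne : ∀ g ∈ G, (S g).Nonempty := fun g hg ↦ card_pos.1 (by grind)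
    obtain ⟨g₀, hg₀⟩ := card_pos.1 (Nat.zero_lt_of_lt hG)
    have : Nonempty β := ⟨(hne g₀ hg₀).choose⟩
    have hmax : ∀ g ∈ G, ∃ x ∈ S g, ∀ y ∈ S g, y ≤ x := fun g hg ↦
      ⟨_, (S g).max'_mem (hne g hg), fun y hy ↦ (S g).le_max' y hy⟩
    choose! top htop hle using hmax
    -- Outside `G'` the map `top` is strictly increasing into `F`, so few indices are lost there;
    -- a chain found in `G'` by induction on the sets without their maxima extends by some `top g₁`.
    let G' : Finset ι := {g' ∈ G | ∃ g ∈ G, g < g' ∧ ∀ y ∈ (S g').erase (top g'), y < top g}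
    have hmono : StrictMonoOn top (G \ G' : Finset ι) := by
      intro g hg g' hg' hlt
      simp only [coe_sdiff, Set.mem_sdiff, mem_coe] at hg hg'
      obtain ⟨y, hy, hgy⟩ : ∃ y ∈ (S g').erase (top g'), top g ≤ y := by
        by_contra! hcon
        exact hg'.2 (mem_filter.2 ⟨hg'.1, g, hg.1, hlt, hcon⟩)
      exact hgy.trans_lt ((hle g' hg'.1 y (mem_of_mem_erase hy)).lt_of_ne (ne_of_mem_erase hy))
    have hcard : #(G \ G') ≤ #F :=
      card_le_card_of_injOn top (fun g hg ↦ hSF g (sdiff_subset hg) (htop g (sdiff_subset hg)))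
        hmono.injOn
    obtain ⟨g, x, hg, hx, hmem⟩ := ih (G := G') (S := fun g ↦ (S g).erase (top g))
      (fun g hg ↦ (erase_subset _ _).trans (hSF g (filter_subset _ _ hg)))
      (fun g hg ↦ by
        have hgG := filter_subset _ _ hg
        have := hS g hgG
        grind [card_erase_of_mem (htop g hgG)])
      (by have := le_card_sdiff G' G; grind)
    obtain ⟨-, g₁, hg₁, hlt, htop₁⟩ := mem_filter.1 (hmem 0).1
    refine ⟨Matrix.vecCons g₁ g, Matrix.vecCons (top g₁) x, strictMono_vecCons.2 ⟨hlt, hg⟩,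
      strictAnti_vecCons.2 ⟨htop₁ _ (hmem 0).2, hx⟩, Fin.cases ⟨hg₁, htop g₁ hg₁⟩ fun i ↦ ?_⟩
    exact ⟨filter_subset _ _ (hmem i).1, mem_of_mem_erase (hmem i).2⟩

section Words

variable {α : Type*}

/-- The factor `w_a w_{a+1} … w_{b-1}` of the infinite word `w`. Finite words are handled as
prefixes `subword w 0 N`, so that positions are plain natural numbers. -/
def subword (w : ℕ → α) (a b : ℕ) : List α := (List.Ico a b).map w

@[simp]
theorem length_subword (w : ℕ → α) (a b : ℕ) : (subword w a b).length = b - a := by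
  simp [subword]

theorem subword_append_subword (w : ℕ → α) {a b c : ℕ} (hab : a ≤ b) (hbc : b ≤ c) :
    subword w a b ++ subword w b c = subword w a c := by
  rw [subword, subword, ← List.map_append, List.Ico.append_consecutive hab hbc, subword]

theorem subword_eq_subword_iff (w : ℕ → α) {i j k : ℕ} :
    subword w i (i + k) = subword w j (j + k) ↔ ∀ t < k, w (i + t) = w (j + t) := by
  simp [subword, List.Ico, List.range'_eq_map_range]

theorem take_drop_subword (w : ℕ → α) {i r k m : ℕ} (h : r + k ≤ m) :
    ((subword w i (i + m)).drop r).take k = subword w (i + r) (i + r + k) := by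
  rw [← subword_append_subword w (b := i + r) (by omega) (by omega),
    List.drop_left' (by simp), ← subword_append_subword w (b := i + r + k) (by omega) (by omega),
    List.take_left' (by simp)]

theorem flatten_ofFn_subword (w : ℕ → α) {m : ℕ} {c : Fin (m + 1) → ℕ} (hc : Monotone c) :
    (List.ofFn fun a : Fin m ↦ subword w (c a.castSucc) (c a.succ)).flatten =
      subword w (c 0) (c (Fin.last m)) := by
  induction m with
  | zero => simp [subword]
  | succ m ih =>
    have htail := ih (hc.comp (Fin.strictMono_succ (n := m + 1)).monotone)
    simp only [Function.comp_apply, Fin.succ_castSucc, Fin.succ_last] at htail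
    rw [List.ofFn_succ, List.flatten_cons, htail]
    exact subword_append_subword w (hc (Fin.zero_le _)) (hc (Fin.le_last _))

theorem subword_getD (L : List α) (c : α) : subword (fun j ↦ L.getD j c) 0 L.length = L := by
  refine List.ext_getElem (by simp) fun j _ hj ↦ ?_
  simp [subword, List.Ico, hj]

theorem subword_eq_flatten_replicate (w : ℕ → α) {i p k m : ℕ}
    (h : subword w i (i + k) = subword w (i + p) (i + p + k)) (hm : m * p ≤ k) :
    subword w i (i + (m + 1) * p) = (List.replicate (m + 1) (subword w i (i + p))).flatten := by
  induction m with
  | zero => simp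
  | succ m ih =>
    have hshift : subword w (i + p) (i + p + (m + 1) * p) = subword w i (i + (m + 1) * p) :=
      (subword_eq_subword_iff w).2 fun t ht ↦
        ((subword_eq_subword_iff w).1 h t (ht.trans_le hm)).symm
    rw [List.replicate_succ, List.flatten_cons, ← ih (by linarith), ← hshift,
      subword_append_subword w (by omega) (by omega)]
    congr 1
    ring

/-- The word `L` contains the `n`-th power of a nonempty word as a factor. -/
def ContainsPower (n : ℕ) (L : List α) : Prop :=
  ∃ x u y, u ≠ [] ∧ L = x ++ ((List.replicate n u).flatten ++ y)

theorem containsPower_of_subword_eq (w : ℕ → α) {N n i p k : ℕ} (hp : 0 < p) (hk : n * p ≤ k)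
    (hN : i + p + k ≤ N) (h : subword w i (i + k) = subword w (i + p) (i + p + k)) :
    ContainsPower (n + 1) (subword w 0 N) := by
  have hnp : (n + 1) * p ≤ p + k := by linarith
  refine ⟨subword w 0 i, subword w i (i + p), subword w (i + (n + 1) * p) N, ?_, ?_⟩
  · exact List.ne_nil_of_length_pos (by simpa using hp)
  · rw [← subword_eq_flatten_replicate w h hk, subword_append_subword w (by omega) (by omega),
      subword_append_subword w (by omega) (by omega)]

variable [LinearOrder α]

theorem append_lt_append_of_lt : ∀ {a b : List α}, a < b → a.length = b.length →
    ∀ s t, a ++ s < b ++ t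
  | [], [], h, _ => absurd h (lt_irrefl _)
  | x :: a, y :: b, h, hl => fun s t ↦ by
    rw [List.cons_lt_cons_iff] at h
    rw [List.cons_append, List.cons_append, List.cons_lt_cons_iff]
    exact h.imp_right fun h ↦ ⟨h.1, append_lt_append_of_lt h.2 (by simpa using hl) s t⟩

/-- Shirshov's `n`-divisibility: the word `L` ends in a product `u₀ u₁ … uₙ₋₁` of nonempty words
with `u₀ > u₁ > ⋯ > uₙ₋₁`, where each comparison is decided at a letter (neither word being a prefix
of the other), hence persists under all right extensions `s`, `t`. -/
def IsDivisible (n : ℕ) (L : List α) : Prop :=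
  ∃ (v : List α) (u : Fin n → List α), L = v ++ (List.ofFn u).flatten ∧ (∀ i, u i ≠ []) ∧
    ∀ ⦃i j⦄, i < j → ∀ s t, u j ++ s < u i ++ t

theorem isDivisible_of_strictAnti (w : ℕ → α) {N n k : ℕ} (hk : 0 < k) {i : Fin (n + 1) → ℕ}
    (hsep : ∀ ⦃a b⦄, a < b → i a + k ≤ i b) (hN : ∀ a, i a + k ≤ N)
    (hanti : StrictAnti fun a ↦ subword w (i a) (i a + k)) :
    IsDivisible (n + 1) (subword w 0 N) := by
  let c : Fin (n + 2) → ℕ := Fin.snoc i N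
  have hcast : ∀ a, c (Fin.castSucc a) = i a := fun a ↦ by simp [c]
  have hnext : ∀ a, i a + k ≤ c a.succ :=
    Fin.lastCases (by simpa [c] using hN _) fun a ↦ by
      rw [Fin.succ_castSucc, hcast]
      exact hsep a.castSucc_lt_succ
  have hmono : Monotone c := Fin.monotone_iff_le_succ.2 fun a ↦ by grind
  have hprefix : ∀ a, subword w (i a) (c a.succ) =
      subword w (i a) (i a + k) ++ subword w (i a + k) (c a.succ) := fun a ↦
    (subword_append_subword w (by omega) (hnext a)).symm
  refine ⟨subword w 0 (c 0), fun a ↦ subword w (c a.castSucc) (c a.succ), ?_, ?_, ?_⟩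
  · rw [flatten_ofFn_subword w hmono, subword_append_subword w (by omega) (hmono (Fin.zero_le _))]
    simp [c]
  · intro a
    have := hnext a
    exact List.ne_nil_of_length_pos (by rw [length_subword, hcast]; omega)
  · intro a b hab s t
    simp only [hcast, hprefix, List.append_assoc]
    exact append_lt_append_of_lt (hanti hab) (by simp) _ _

theorem flatten_lt_flatten_of_perm : ∀ {us us' : List (List α)},
    us.Pairwise (fun u v ↦ ∀ s t, v ++ s < u ++ t) → us'.Perm us → us' ≠ us →
    us'.flatten < us.flatten
  | [], _, _, hperm, hne => absurd hperm.eq_nil hne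
  | _ :: _, [], _, hperm, _ => by simp at hperm
  | u :: us, v :: us', hpw, hperm, hne => by
    rw [List.pairwise_cons] at hpw
    rw [List.flatten_cons, List.flatten_cons]
    by_cases hvu : v = u
    · subst hvu
      exact List.append_left_lt
        (flatten_lt_flatten_of_perm hpw.2 (hperm.cons_inv) (by simpa using hne))
    · have hv : v ∈ us := by simpa [hvu] using hperm.subset List.mem_cons_self
      exact hpw.1 v hv _ _

end Words

section Runs

variable {α : Type*} {w : ℕ → α} {N n k m q s : ℕ}

/-- Within the first `N` letters of `w` there are `m` consecutive blocks of length `k` taking at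
most `n` distinct values. -/
def HasPoorRun (w : ℕ → α) (N n k m : ℕ) : Prop :=
  ∃ (b : ℕ) (F : Finset (List α)), b + k * m ≤ N ∧ #F ≤ n ∧
    ∀ t < m, subword w (b + k * t) (b + k * t + k) ∈ F

section DecidableEq

variable [DecidableEq α]

theorem subword_mem_image₂_append {b t : ℕ} {F : Finset (List α)} (ht : 2 * t + 1 < m)
    (hF : ∀ t < m, subword w (b + k * t) (b + k * t + k) ∈ F) :
    subword w (b + 2 * k * t) (b + 2 * k * t + 2 * k) ∈ image₂ (· ++ ·) F F := by
  refine mem_image₂.2 ⟨_, hF (2 * t) (by omega), _, hF (2 * t + 1) ht, ?_⟩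
  rw [show b + k * (2 * t + 1) = b + k * (2 * t) + k by ring,
    subword_append_subword w (by omega) (by omega)]
  ring_nf

theorem card_image₂_append_le {F : Finset (List α)} (hF : #F ≤ n) :
    #(image₂ (· ++ ·) F F) ≤ n * n :=
  (card_image₂_le _ _ _).trans (Nat.mul_le_mul hF hF)

theorem exists_subword_eq_of_card_image_le {a : ℕ}
    (h : #((Icc a (a + n)).image fun i ↦ subword w i (i + k)) ≤ n) :
    ∃ i p, 0 < p ∧ a ≤ i ∧ i + p ≤ a + n ∧
      subword w i (i + k) = subword w (i + p) (i + p + k) := by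
  obtain ⟨i, hi, j, hj, hne, heq⟩ := exists_ne_map_eq_of_card_lt_of_maps_to
    (h.trans_lt (by rw [Nat.card_Icc]; omega)) fun i ↦ mem_image_of_mem _
  wlog hlt : i < j generalizing i j
  · exact this j hj i hi hne.symm heq.symm (by omega)
  obtain ⟨p, rfl⟩ := Nat.exists_eq_add_of_lt hlt
  exact ⟨i, p + 1, by omega, (mem_Icc.1 hi).1, (mem_Icc.1 hj).2, heq⟩

end DecidableEq

variable [LinearOrder α]

theorem exists_card_image_subword_le (hw : ¬IsDivisible (n + 1) (subword w 0 N)) (hk : 0 < k)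
    {P : ℕ → Finset ℕ} {F : Finset (List α)}
    (hsep : ∀ ⦃g g'⦄, g < g' → ∀ i ∈ P g, ∀ i' ∈ P g', i + k ≤ i')
    (hN : ∀ g < q, ∀ i ∈ P g, i + k ≤ N)
    (hF : ∀ g < q, ∀ i ∈ P g, subword w i (i + k) ∈ F) (hq : n * #F < q) :
    ∃ g < q, #((P g).image fun i ↦ subword w i (i + k)) ≤ n := by
  by_contra! hcon
  obtain ⟨g, x, hg, hx, hmem⟩ := exists_strictMono_strictAnti_mem (G := range q)
    (S := fun g ↦ (P g).image fun i ↦ subword w i (i + k)) (F := F)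
    (fun g hg ↦ image_subset_iff.2 (hF g (mem_range.1 hg)))
    (fun g hg ↦ hcon g (mem_range.1 hg)) (by simpa using hq)
  simp only [mem_range, mem_image] at hmem
  choose hgq i hi hix using hmem
  refine hw (isDivisible_of_strictAnti w hk (fun a b hab ↦ hsep (hg hab) _ (hi a) _ (hi b))
    (fun a ↦ hN _ (hgq a) _ (hi a)) ?_)
  simpa only [hix] using hx

theorem hasPoorRun_of_forall_mem (hw : ¬IsDivisible (n + 1) (subword w 0 N)) (hk : 0 < k) {b : ℕ}
    {F : Finset (List α)} (hb : b + k * (q * m) ≤ N)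
    (hF : ∀ t < q * m, subword w (b + k * t) (b + k * t + k) ∈ F) (hq : n * #F < q) :
    HasPoorRun w N n k m := by
  have hgroup : ∀ ⦃g g' t⦄, g < g' → t < m → g * m + t + 1 ≤ g' * m := fun g g' t hg ht ↦ by
    nlinarith [Nat.mul_le_mul_right m hg]
  obtain ⟨g, hg, hcard⟩ := exists_card_image_subword_le hw hk
    (P := fun g ↦ (range m).image fun t ↦ b + k * (g * m + t)) (F := F) (q := q)
    (by
      simp only [forall_mem_image, mem_range]
      intro g g' hg t ht t' _
      nlinarith [hgroup hg ht])
    (by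
      simp only [forall_mem_image, mem_range]
      intro g hg t ht
      nlinarith [hgroup hg ht])
    (by
      simp only [forall_mem_image, mem_range]
      exact fun g hg t ht ↦ hF _ (hgroup hg ht)) hq
  refine ⟨b + k * (g * m), _, ?_, hcard, fun t ht ↦ mem_image.2 ⟨b + k * (g * m + t), ?_, ?_⟩⟩
  · nlinarith [Nat.mul_le_mul_right m hg]
  · exact mem_image_of_mem _ (mem_range.2 ht)
  · ring_nf

theorem HasPoorRun.double (h : HasPoorRun w N n k (2 * q * m))
    (hw : ¬IsDivisible (n + 1) (subword w 0 N)) (hk : 0 < k) (hq : n * (n * n) < q) :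
    HasPoorRun w N n (2 * k) m := by
  obtain ⟨b, F, hb, hFn, hF⟩ := h
  refine hasPoorRun_of_forall_mem hw (by omega) (b := b) (by linarith)
    (fun t ht ↦ subword_mem_image₂_append (by linarith) hF)
    ((Nat.mul_le_mul_left n (card_image₂_append_le hFn)).trans_lt hq)

theorem HasPoorRun.two_pow (h : HasPoorRun w N n 1 ((2 * q) ^ s * m))
    (hw : ¬IsDivisible (n + 1) (subword w 0 N)) (hq : n * (n * n) < q) :
    HasPoorRun w N n (2 ^ s) m := by
  induction s generalizing m with
  | zero => simpa using h
  | succ s ih =>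
    rw [pow_succ, mul_assoc] at h
    rw [pow_succ']
    exact (ih h).double hw (by positivity) hq

theorem hasPoorRun_one [Fintype α] (hw : ¬IsDivisible (n + 1) (subword w 0 N))
    (hq : n * Fintype.card α < q) (hN : q * m ≤ N) : HasPoorRun w N n 1 m := by
  refine hasPoorRun_of_forall_mem hw one_pos (b := 0) (F := univ.image fun a ↦ [a])
    (by simpa using hN) (fun t _ ↦ by simp [subword]) (lt_of_le_of_lt ?_ hq)
  exact Nat.mul_le_mul_left n card_image_le

theorem HasPoorRun.exists_shift_eq (h : HasPoorRun w N n k (2 * q))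
    (hw : ¬IsDivisible (n + 1) (subword w 0 N)) (hk : 0 < k) (hnk : n ≤ k)
    (hq : n * ((n + 1) * (n * n)) < q) :
    ∃ i p, 0 < p ∧ p ≤ n ∧ i + p + k ≤ N ∧
      subword w i (i + k) = subword w (i + p) (i + p + k) := by
  obtain ⟨b, F, hb, hFn, hF⟩ := h
  have hN : ∀ g < q, ∀ i ∈ Icc (b + 2 * k * g) (b + 2 * k * g + n), i + k ≤ N := by
    simp only [mem_Icc]
    rintro g hg i ⟨-, hi⟩
    nlinarith [Nat.mul_le_mul_left k hg]
  obtain ⟨g, hg, hcard⟩ := exists_card_image_subword_le hw hk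
    (P := fun g ↦ Icc (b + 2 * k * g) (b + 2 * k * g + n))
    (F := image₂ (fun r x ↦ (x.drop r).take k) (range (n + 1)) (image₂ (· ++ ·) F F)) (q := q)
    (by
      simp only [mem_Icc]
      rintro g g' hgg i ⟨-, hi⟩ i' ⟨hi', -⟩
      nlinarith [Nat.mul_le_mul_left k hgg])
    hN
    (by
      simp only [mem_Icc]
      rintro g hg i ⟨hgi, hi⟩
      obtain ⟨r, rfl⟩ := Nat.exists_eq_add_of_le hgi
      refine mem_image₂.2 ⟨r, mem_range.2 (by omega), _,
        subword_mem_image₂_append (t := g) (by omega) hF, take_drop_subword w (by omega)⟩)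
    (((Nat.mul_le_mul_left n ((card_image₂_le _ _ _).trans (Nat.mul_le_mul (card_range _).le
      (card_image₂_append_le hFn))))).trans_lt hq)
  obtain ⟨i, p, hp, hi, hip, heq⟩ := exists_subword_eq_of_card_image_le hcard
  exact ⟨i, p, hp, by omega, hN g hg _ (mem_Icc.2 ⟨by omega, hip⟩), heq⟩

end Runs

/-- The length from which words over `l` letters are `d`-divisible or contain a `d`-th power:
a factor `l * d` finds the first poor run, each of the `Nat.clog 2 (d ^ 2)` doublings of the block
length costs a factor `2 * d ^ 3`, and comparing shifted blocks costs the last `2 * d ^ 4`. -/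
def shirshovBound (l d : ℕ) : ℕ :=
  l * d * ((2 * d ^ 3) ^ Nat.clog 2 (d ^ 2) * (2 * d ^ 4))

theorem isDivisible_or_containsPower {α : Type*} [LinearOrder α] [Fintype α] {n : ℕ} {L : List α}
    (hL : L ≠ []) (hbound : shirshovBound (Fintype.card α) (n + 1) ≤ L.length) :
    IsDivisible (n + 1) L ∨ ContainsPower (n + 1) L := by
  rw [or_iff_not_imp_left]
  obtain ⟨c, -⟩ := List.exists_mem_of_ne_nil L hL
  have hcard : 0 < Fintype.card α := Fintype.card_pos_iff.2 ⟨c⟩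
  rw [← subword_getD L c]
  intro hw
  have hclog : (n + 1) ^ 2 ≤ 2 ^ Nat.clog 2 ((n + 1) ^ 2) := Nat.le_pow_clog one_lt_two _
  have hrun := ((hasPoorRun_one hw (by nlinarith) hbound).two_pow hw
    (by ring_nf; omega)).exists_shift_eq hw (by positivity) (by nlinarith) (by ring_nf; omega)
  obtain ⟨i, p, hp, hpn, hN, heq⟩ := hrun
  exact containsPower_of_subword_eq _ hp (by nlinarith) hN heq

section Polarization

variable {ι : Type*} [Fintype ι] [DecidableEq ι]

theorem sum_neg_one_pow_card_of_mapsTo_compl (r : ι → ι) :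
    ∑ S : Finset ι with ∀ i, r i ∈ Sᶜ, (-1 : ℤ) ^ #S = if Function.Bijective r then 1 else 0 := by
  have hpowerset : ({S : Finset ι | ∀ i, r i ∈ Sᶜ} : Finset _) = (univ.image r)ᶜ.powerset := by
    ext S
    simp [← subset_compl_comm (s := univ.image r), image_subset_iff]
  have hsurj : (univ.image r)ᶜ = ∅ ↔ Function.Bijective r := by
    rw [compl_eq_empty_iff, ← coe_eq_univ, coe_image, coe_univ, Set.image_univ, Set.range_eq_univ,
      Finite.surjective_iff_bijective]
  simp only [hpowerset, sum_powerset_neg_one_pow_card, hsurj]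

theorem sum_perm_map_comp {R M N : Type*} [Semiring R] [AddCommMonoid M] [Module R M]
    [AddCommGroup N] [Module R N] (f : MultilinearMap R (fun _ : ι ↦ M) N) (x : ι → M) :
    ∑ σ : Equiv.Perm ι, f (fun i ↦ x (σ i)) =
      ∑ S : Finset ι, (-1 : ℤ) ^ #S • f fun _ ↦ ∑ i ∈ Sᶜ, x i := by
  symm
  calc ∑ S : Finset ι, (-1 : ℤ) ^ #S • f (fun _ ↦ ∑ i ∈ Sᶜ, x i)
      = ∑ S : Finset ι, ∑ r : ι → ι with ∀ i, r i ∈ Sᶜ, (-1 : ℤ) ^ #S • f fun i ↦ x (r i) := by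
        refine sum_congr rfl fun S _ ↦ ?_
        rw [f.map_sum_finset, smul_sum]
        refine sum_congr ?_ fun _ _ ↦ rfl
        ext r
        simp
    _ = ∑ r : ι → ι, (∑ S : Finset ι with ∀ i, r i ∈ Sᶜ, (-1 : ℤ) ^ #S) • f fun i ↦ x (r i) := by
        simp only [sum_smul]
        exact sum_comm' (by simp)
    _ = ∑ r : ι → ι, if Function.Bijective r then f fun i ↦ x (r i) else 0 := by
        simp only [sum_neg_one_pow_card_of_mapsTo_compl, ite_smul, one_smul, zero_smul]
    _ = ∑ σ : Equiv.Perm ι, f (fun i ↦ x (σ i)) := by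
        symm
        refine sum_of_injOn (fun σ ↦ ⇑σ) DFunLike.coe_injective.injOn
          (fun _ _ ↦ mem_coe.2 (mem_univ _)) (fun r _ hr ↦ if_neg fun hbij ↦ hr ?_)
          fun σ _ ↦ (if_pos σ.bijective).symm
        exact ⟨Equiv.ofBijective r hbij, by simp, rfl⟩

end Polarization

theorem sum_perm_prod_ofFn_eq_zero {R : Type*} [Ring R] {d : ℕ} {x : Fin d → R}
    (h : ∀ S : Finset (Fin d), (∑ i ∈ S, x i) ^ d = 0) :
    ∑ σ : Equiv.Perm (Fin d), (List.ofFn fun i ↦ x (σ i)).prod = 0 := by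
  simpa [h] using sum_perm_map_comp (MultilinearMap.mkPiAlgebraFin ℤ d R) x

section NilSubring

variable {α U : Type*} [Ring U] {I : NonUnitalSubring U} {y : α → U} {d : ℕ} {L : List α}

theorem prod_map_mem (hy : ∀ c, y c ∈ I) : ∀ {L : List α}, L ≠ [] → (L.map y).prod ∈ I
  | [a], _ => by simpa using hy a
  | a :: b :: L, _ => by
    rw [List.map_cons, List.prod_cons]
    exact I.mul_mem (hy a) (prod_map_mem hy (by simp))

theorem ContainsPower.prod_map_eq_zero (hL : ContainsPower d L) (hy : ∀ c, y c ∈ I)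
    (hI : ∀ a ∈ I, a ^ d = 0) : (L.map y).prod = 0 := by
  obtain ⟨v, u, z, hu, rfl⟩ := hL
  simp [List.prod_flatten, List.map_flatten, hI _ (prod_map_mem hy hu)]

variable [LinearOrder α]

theorem IsDivisible.prod_map_eq_zero (hL : IsDivisible d L) (hy : ∀ c, y c ∈ I)
    (hI : ∀ a ∈ I, a ^ d = 0)
    (hlt : ∀ L' < L, L'.length = L.length → (L'.map y).prod = 0) : (L.map y).prod = 0 := by
  obtain ⟨v, u, rfl, hu, hdesc⟩ := hL
  have hinj : Function.Injective u := Function.Injective.of_lt_imp_ne fun i j hij heq ↦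
    lt_irrefl (u i ++ []) (by simpa only [heq] using hdesc hij [] [])
  have hpolar := sum_perm_prod_ofFn_eq_zero (x := fun i ↦ ((u i).map y).prod) fun S ↦
    hI _ (I.sum_mem fun i _ ↦ prod_map_mem hy (hu i))
  have hprod : ∀ σ : Equiv.Perm (Fin d),
      ((v ++ (List.ofFn fun i ↦ u (σ i)).flatten).map y).prod =
        (v.map y).prod * (List.ofFn fun i ↦ ((u (σ i)).map y).prod).prod := fun σ ↦ by
    simp [List.prod_flatten, List.map_flatten, List.map_ofFn, Function.comp_def]
  have hsum : ∑ σ : Equiv.Perm (Fin d),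
      ((v ++ (List.ofFn fun i ↦ u (σ i)).flatten).map y).prod = 0 := by
    rw [sum_congr rfl fun σ _ ↦ hprod σ, ← mul_sum, hpolar, mul_zero]
  rwa [Fintype.sum_eq_single 1 fun σ hσ ↦ ?_] at hsum
  have hperm : (List.ofFn fun i ↦ u (σ i)).Perm (List.ofFn u) := Equiv.Perm.ofFn_comp_perm σ u
  have hne : (List.ofFn fun i ↦ u (σ i)) ≠ List.ofFn u := fun heq ↦
    hσ (Equiv.ext fun i ↦ hinj (congrFun (List.ofFn_injective heq) i))
  refine hlt _ (List.append_left_lt ?_) ?_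
  · exact flatten_lt_flatten_of_perm (List.pairwise_ofFn.2 fun i j hij ↦ hdesc hij) hperm hne
  · rw [List.length_append, List.length_append, hperm.flatten.length_eq]

theorem prod_map_eq_zero_of_shirshovBound_le [Fintype α] {n : ℕ} (hy : ∀ c, y c ∈ I)
    (hI : ∀ a ∈ I, a ^ (n + 1) = 0) (hL : L ≠ [])
    (hbound : shirshovBound (Fintype.card α) (n + 1) ≤ L.length) : (L.map y).prod = 0 := by
  have hwf : {L' : List α | L'.length = L.length}.WellFoundedOn (· < ·) :=
    (List.finite_length_eq α L.length).wellFoundedOn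
  refine hwf.induction (P := fun L ↦ (L.map y).prod = 0) rfl fun L' (hL' : _ = _) ih ↦ ?_
  have hne : L' ≠ [] := by simpa [← List.length_pos_iff, hL'] using hL
  rcases isDivisible_or_containsPower hne (hL' ▸ hbound) with hdiv | hpow
  · exact hdiv.prod_map_eq_zero hy hI fun L'' hlt hlen ↦ ih L'' (hlen.trans hL') hlt
  · exact hpow.prod_map_eq_zero hy hI

end NilSubring

section Generators

theorem foldl_mul_foldl {A : Type*} [Semigroup A] (a b : A) (L M : List A) :
    L.foldl (· * ·) a * M.foldl (· * ·) b = (L ++ b :: M).foldl (· * ·) a := by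
  rw [List.foldl_append, List.foldl_cons, List.foldl_assoc]

variable (K : Type*) [CommSemiring K] {A ι : Type*}

/-- The `K`-linear span of the products of at least `m` elements of the family `g`. -/
def productSpan [NonUnitalSemiring A] [Module K A] (g : ι → A) (m : ℕ) : Submodule K A :=
  Submodule.span K
    {x | ∃ (c : ι) (W : List ι), m ≤ W.length + 1 ∧ (W.map g).foldl (· * ·) (g c) = x}

variable {K} [NonUnitalSemiring A] [Module K A] {g : ι → A} {m m' : ℕ} {x x' : A}

theorem productSpan_antitone : Antitone (productSpan K g) := fun _ _ hm ↦
  Submodule.span_mono fun _ ⟨c, W, hW, hx⟩ ↦ ⟨c, W, hm.trans hW, hx⟩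

theorem productSpan_eq_bot (h : ∀ c W, m ≤ List.length W + 1 → (W.map g).foldl (· * ·) (g c) = 0) :
    productSpan K g m = ⊥ :=
  Submodule.span_eq_bot.2 fun _ ⟨c, W, hW, hx⟩ ↦ hx ▸ h c W hW

variable [IsScalarTower K A A] [SMulCommClass K A A]

theorem mul_mem_productSpan (hx : x ∈ productSpan K g m) (hx' : x' ∈ productSpan K g m') :
    x * x' ∈ productSpan K g (m + m') := by
  have hmul := Submodule.apply_mem_map₂ (LinearMap.mul K A) hx hx'
  rw [productSpan, productSpan, Submodule.map₂_span_span] at hmul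
  refine Submodule.span_mono ?_ hmul
  rintro _ ⟨_, ⟨c, W, hW, rfl⟩, _, ⟨c', W', hW', rfl⟩, rfl⟩
  refine ⟨c, W ++ c' :: W', by simp; omega, ?_⟩
  simp only [List.map_append, List.map_cons, ← foldl_mul_foldl, LinearMap.mul_apply']

theorem mem_productSpan_one (hgen : NonUnitalAlgebra.adjoin K (Set.range g) = ⊤) (x : A) :
    x ∈ productSpan K g 1 := by
  have hx : x ∈ NonUnitalAlgebra.adjoin K (Set.range g) := hgen ▸ trivial
  induction hx using NonUnitalAlgebra.adjoin_induction with
  | mem x hx =>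
    obtain ⟨c, rfl⟩ := hx
    exact Submodule.subset_span ⟨c, [], by simp, rfl⟩
  | add _ _ _ _ hx hy => exact add_mem hx hy
  | zero => exact zero_mem _
  | mul _ _ _ _ hx hy =>
    exact productSpan_antitone (Nat.le_add_right 1 1) (mul_mem_productSpan hx hy)
  | smul r _ _ hx => exact Submodule.smul_mem _ r hx

theorem foldl_mul_mem_productSpan (hgen : NonUnitalAlgebra.adjoin K (Set.range g) = ⊤) (L : List A)
    (a : A) : L.foldl (· * ·) a ∈ productSpan K g (L.length + 1) := by
  induction L using List.reverseRecOn with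
  | nil => exact mem_productSpan_one hgen a
  | append_singleton L b ih =>
    rw [List.foldl_append, List.length_append]
    exact mul_mem_productSpan ih (mem_productSpan_one hgen b)

end Generators

theorem inr_foldl_mul {R A : Type*} [CommSemiring R] [NonUnitalSemiring A] [Module R A]
    [IsScalarTower R A A] [SMulCommClass R A A] (L : List A) (a : A) :
    ((L.foldl (· * ·) a : A) : Unitization R A) =
      ((a :: L).map (Unitization.inr (R := R))).prod := by
  induction L generalizing a with
  | nil => simp
  | cons b L ih => simp [ih, mul_assoc]

theorem foldl_mul_eq_zero_of_shirshovBound_le {A : Type*} [NonUnitalRing A] {l n : ℕ}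
    (g : Fin l → A) (hnil : ∀ a : A, (List.replicate n a).foldl (· * ·) a = 0)
    (c : Fin l) (W : List (Fin l))
    (hW : shirshovBound l (n + 1) ≤ W.length + 1) : (W.map g).foldl (· * ·) (g c) = 0 := by
  let ι : A →ₙ+* Unitization ℤ A := Unitization.inrNonUnitalAlgHom ℤ A
  have hpow : ∀ a ∈ ι.range, a ^ (n + 1) = 0 := by
    rintro _ ⟨a, rfl⟩
    change (a : Unitization ℤ A) ^ (n + 1) = 0
    rw [← List.prod_replicate, List.replicate_succ, ← List.map_replicate, ← List.map_cons,
      ← inr_foldl_mul, hnil, Unitization.inr_zero]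
  have hprod := prod_map_eq_zero_of_shirshovBound_le (I := ι.range) (y := fun c ↦ ι (g c))
    (fun c ↦ NonUnitalRingHom.mem_range_self ι (g c)) hpow
    (List.cons_ne_nil c W) (by simpa using hW)
  refine Unitization.inr_injective (R := ℤ) ?_
  rw [inr_foldl_mul, ← List.map_cons, List.map_map, Unitization.inr_zero, ← hprod]
  rfl

theorem logb_two_le_two_mul_logb_three {x : ℝ} (hx : 1 ≤ x) :
    Real.logb 2 x ≤ 2 * Real.logb 3 x := by
  have hlog : Real.log 3 ≤ 2 * Real.log 2 := by
    rw [← Real.log_rpow two_pos]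
    exact Real.log_le_log (by norm_num) (by norm_num)
  have h2 : 0 < Real.log 2 := Real.log_pos one_lt_two
  have h3 : 0 < Real.log 3 := Real.log_pos (by norm_num)
  rw [Real.logb, Real.logb, ← mul_div_assoc, div_le_div_iff₀ h2 h3]
  nlinarith [Real.log_nonneg hx]

theorem two_pow_clog_le {m : ℕ} (hm : m ≠ 0) : 2 ^ Nat.clog 2 m ≤ 2 * m := by
  rcases Nat.lt_or_ge 1 m with hm1 | hm1
  · have hpos := Nat.clog_pos one_lt_two hm1
    rw [← Nat.sub_add_cancel hpos, pow_succ']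
    exact Nat.mul_le_mul_left 2 (Nat.pow_pred_clog_lt_self one_lt_two hm1).le
  · simp [show m = 1 by omega]

theorem clog_two_le_two_mul_logb_three_add_one {m : ℕ} (hm : m ≠ 0) :
    (Nat.clog 2 m : ℝ) ≤ 2 * Real.logb 3 m + 1 := by
  have hm1 : (1 : ℝ) ≤ m := by exact_mod_cast Nat.one_le_iff_ne_zero.2 hm
  rw [← Real.natCeil_logb_natCast]
  have hceil := Nat.ceil_lt_add_one (Real.logb_nonneg one_lt_two hm1)
  push_cast
  linarith [logb_two_le_two_mul_logb_three hm1]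

theorem pow_three_mul_clog_two_sq_le {d : ℕ} (hd : d ≠ 0) :
    (d : ℝ) ^ (3 * Nat.clog 2 (d ^ 2)) ≤
      ((d : ℝ) ^ 2) ^ (3 * Real.logb 3 ((d : ℝ) ^ 2)) * d ^ 3 := by
  have hd1 : (1 : ℝ) ≤ d := by exact_mod_cast Nat.one_le_iff_ne_zero.2 hd
  have hclog := clog_two_le_two_mul_logb_three_add_one (pow_ne_zero 2 hd)
  set x := Real.logb 3 ((d : ℝ) ^ 2)
  calc (d : ℝ) ^ (3 * Nat.clog 2 (d ^ 2)) = (d : ℝ) ^ (3 * (Nat.clog 2 (d ^ 2) : ℝ)) := by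
        rw [← Real.rpow_natCast]
        push_cast
        rfl
    _ ≤ (d : ℝ) ^ (2 * (3 * x) + (3 : ℕ)) := by
        refine Real.rpow_le_rpow_of_exponent_le hd1 ?_
        push_cast at hclog ⊢
        linarith
    _ = ((d : ℝ) ^ 2) ^ (3 * x) * d ^ 3 := by
        rw [Real.rpow_add_natCast (by positivity), Real.rpow_mul (by positivity), Real.rpow_two]

theorem shirshovBound_le (l : ℕ) {d : ℕ} (hd : d ≠ 0) :
    (shirshovBound l d : ℝ) ≤ (2 : ℝ) ^ 18 * l *
      ((d : ℝ) ^ 2) ^ (3 * Real.logb 3 ((d : ℝ) ^ 2) + 13) * (d : ℝ) ^ 2 := by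
  have hD1 : (1 : ℝ) ≤ (d : ℝ) ^ 2 :=
    one_le_pow₀ (by exact_mod_cast Nat.one_le_iff_ne_zero.2 hd)
  have htwo : (2 : ℝ) ^ Nat.clog 2 (d ^ 2) ≤ 2 * (d : ℝ) ^ 2 := by
    exact_mod_cast two_pow_clog_le (pow_ne_zero 2 hd)
  have hcube := pow_three_mul_clog_two_sq_le hd
  set x := Real.logb 3 ((d : ℝ) ^ 2)
  calc (shirshovBound l d : ℝ)
      = l * d * (2 ^ Nat.clog 2 (d ^ 2) * (d : ℝ) ^ (3 * Nat.clog 2 (d ^ 2)) * (2 * d ^ 4)) := by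
        rw [shirshovBound]
        push_cast
        rw [mul_pow, pow_mul]
    _ ≤ l * d * (2 * (d : ℝ) ^ 2 * (((d : ℝ) ^ 2) ^ (3 * x) * d ^ 3) * (2 * d ^ 4)) := by gcongr
    _ = 2 ^ 2 * l * (((d : ℝ) ^ 2) ^ (3 * x) * ((d : ℝ) ^ 2) ^ 4) * (d : ℝ) ^ 2 := by ring
    _ ≤ 2 ^ 18 * l * (((d : ℝ) ^ 2) ^ (3 * x) * ((d : ℝ) ^ 2) ^ 13) * (d : ℝ) ^ 2 := by
        gcongr <;> norm_num
    _ = 2 ^ 18 * l * ((d : ℝ) ^ 2) ^ (3 * x + 13) * (d : ℝ) ^ 2 := by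
        rw [Real.rpow_add (by positivity)]
        norm_cast

theorem stmt_11_general (K : Type*) [CommSemiring K] (A : Type*) [NonUnitalRing A] [Module K A]
    [IsScalarTower K A A] [SMulCommClass K A A] (l n : ℕ) (g : Fin l → A)
    (hgen : NonUnitalAlgebra.adjoin K (Set.range g) = ⊤)
    (hnil : ∀ a : A, (List.replicate n a).foldl (· * ·) a = 0) (a : A) (L : List A)
    (hL : shirshovBound l (n + 1) ≤ L.length + 1) : L.foldl (· * ·) a = 0 := by
  have hmem := foldl_mul_mem_productSpan hgen L a
  rwa [productSpan_eq_bot fun c W hW ↦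
    foldl_mul_eq_zero_of_shirshovBound_le g hnil c W (hL.trans hW), Submodule.mem_bot] at hmem

/-- Corollary (answering Zelmanov's question): an associative (not necessarily unital)
algebra `A` over a field, generated by `l` elements and satisfying the identity `x^d = 0`,
is nilpotent of index less than `Ψ(d,d,l) = 2^18 · l · (d²)^(3·log₃(d²)+13) · d²`:
every product of `N` elements of `A` with `(N : ℝ) ≥ Ψ(d,d,l)` vanishes. -/
theorem stmt_11 (K : Type*) [Field K] (A : Type*) [NonUnitalRing A] [Module K A]
    [IsScalarTower K A A] [SMulCommClass K A A] (l d : ℕ) (hl : 0 < l) (hd : 0 < d)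
    (g : Fin l → A) (hgen : NonUnitalAlgebra.adjoin K (Set.range g) = ⊤)
    (hnil : ∀ a : A, (List.replicate (d - 1) a).foldl (· * ·) a = 0)
    (N : ℕ)
    (hN : (2 : ℝ) ^ (18 : ℕ) * l * ((d : ℝ) ^ 2) ^ (3 * Real.logb 3 ((d : ℝ) ^ 2) + 13) *
      (d : ℝ) ^ 2 ≤ (N : ℝ)) :
    ∀ (a : A) (L : List A), L.length + 1 = N → L.foldl (· * ·) a = 0 := by
  intro a L hL
  have hbound : shirshovBound l d ≤ N := by exact_mod_cast (shirshovBound_le l hd.ne').trans hN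
  exact stmt_11_general K A l (d - 1) g hgen hnil a L (by rwa [Nat.sub_add_cancel hd, hL])
end

section
/- Let n ≥ 2, l ≥ 1, and consider words over an alphabet of l letters. Every word over this alphabet of length at least Φ(n,l) = 4^{21·log_3 4 + 17} · l · n^{30·log_3 4 + 10 + 12·log_3 n} is either n-divisible, or can be written as a product of at most Φ(n,l) factors, each of which is a power of a word of length less than n. More precisely, the set of non-n-divisible words over the alphabet has height at most Φ(n,l) over the set of words of length less than n: every non-n-divisible word equals u_{1}^{k_1} u_{2}^{k_2} ··· u_{r}^{k_r} with r ≤ Φ(n,l) and each |u_i| < n. -/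
/-!
Let `W` be a word that is not `n`-divisible. A family of disjoint factors of one length cannot
contain `n` that decrease from left to right: extending each of them up to the next one would
`n`-divide `W`. Fix disjoint blocks and look at the windows of length `2 ^ k` at a given offset in
them. They split into `n` classes which increase from left to right, so the number of different
windows grows by a factor of at most `3 * n ^ 3` when the length doubles, and starts from the number
of letters.

Call a block aperiodic if its `n` longest suffixes are pairwise incomparable for the prefix order.
Then `n` disjoint occurrences of it would `n`-divide `W`, by the suffixes taken in decreasing order.
Hence few blocks of length `2 ^ k ≥ 3 * n` are aperiodic, namely subexponentially many in `n` for
`2 ^ k` linear in `n`.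

A block that is not aperiodic acquires a period `p < n` after fewer than `n` letters. Follow this
period until it breaks. If the block starting `2 * n` letters before the break had such a short
period as well, then the first period would continue past the break, as in the Fine–Wilf theorem.
So between consecutive aperiodic positions `W` is a product of at most `n + 2` powers of words
shorter than `n`.
-/

namespace Shirshov

open Finset

theorem card_image_le_card_image_of_forall_eq {ι κ β : Type*} [DecidableEq κ] [DecidableEq β]
    {T : Finset ι} {c : ι → κ} {f : ι → β} (hcf : ∀ i ∈ T, ∀ j ∈ T, c i = c j → f i = f j) :
    #(T.image f) ≤ #(T.image c) := by
  obtain ⟨R, hRT, hbij⟩ := Set.exists_subset_bijOn (T : Set ι) f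
  lift R to Finset ι using T.finite_toSet.subset hRT
  have himage : T.image f = R.image f := by
    rw [← coe_inj, coe_image, coe_image, hbij.image_eq]
  rw [himage, card_image_of_injOn hbij.injOn]
  refine card_le_card_of_injOn c (fun i hi => mem_image_of_mem c (hRT hi)) fun i hi j hj hc => ?_
  exact hbij.injOn hi hj (hcf i (hRT hi) j (hRT hj) hc)

theorem card_image_le_mul_of_card_image_fiber_le {ι κ β : Type*} [DecidableEq κ] [DecidableEq β]
    {S : Finset ι} {f : ι → β} {g : ι → κ} {m : ℕ}
    (hm : ∀ v ∈ S.image g, #({i ∈ S | g i = v}.image f) ≤ m) :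
    #(S.image f) ≤ #(S.image g) * m := by
  have hcover : S.image f ⊆ (S.image g).biUnion fun v => {i ∈ S | g i = v}.image f := by
    refine image_subset_iff.2 fun i hi => mem_biUnion.2 ⟨g i, mem_image_of_mem g hi, ?_⟩
    exact mem_image_of_mem f (mem_filter.2 ⟨hi, rfl⟩)
  exact (card_le_card hcover).trans (card_biUnion_le_card_mul _ _ _ hm)

theorem card_image_prodMk_fiber_add_le {ι β γ : Type*} [LinearOrder ι] [DecidableEq β]
    [DecidableEq γ] {S : Finset ι} {f₁ : ι → β} {f₂ : ι → γ} {g₁ g₂ : ι → ℕ}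
    (hg₁ : Monotone g₁) (hg₂ : Monotone g₂) (j : ι) :
    #({i ∈ S | (g₁ + g₂) i = (g₁ + g₂) j}.image fun i => (f₁ i, f₂ i)) ≤
      #({i ∈ S | g₁ i = g₁ j}.image f₁) * #({i ∈ S | g₂ i = g₂ j}.image f₂) := by
  rw [← card_product]
  refine card_le_card (image_subset_iff.2 fun i hi => ?_)
  obtain ⟨hiS, hij⟩ := mem_filter.1 hi
  have heq : g₁ i = g₁ j ∧ g₂ i = g₂ j := by
    simp only [Pi.add_apply] at hij
    rcases le_total i j with h | h <;> have h₁ := hg₁ h <;> have h₂ := hg₂ h <;> omega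
  exact mem_product.2 ⟨mem_image_of_mem f₁ (mem_filter.2 ⟨hiS, heq.1⟩),
    mem_image_of_mem f₂ (mem_filter.2 ⟨hiS, heq.2⟩)⟩

section Coloring

variable {ι β γ : Type*} [LinearOrder ι] [LinearOrder β] [LinearOrder γ]
  {S : Finset ι} {n D : ℕ}

-- Colour `i` by the size of the largest subset of `S` ending at `i` on which `f` is strictly
-- decreasing.
theorem exists_coloring_monotoneOn {f : ι → β}
    (hf : ∀ T ⊆ S, StrictAntiOn f T → #T < n) :
    ∃ c : ι → ℕ, (∀ i, c i < n) ∧ ∀ a, MonotoneOn f {i ∈ S | c i = a} := by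
  classical
  let chains (i : ι) : Finset (Finset ι) :=
    {T ∈ S.powerset | StrictAntiOn f T ∧ IsGreatest (T : Set ι) i}
  have mem_chains {i : ι} {T : Finset ι} :
      T ∈ chains i ↔ T ⊆ S ∧ StrictAntiOn f T ∧ IsGreatest (T : Set ι) i := by
    simp only [chains, mem_filter, mem_powerset]
  refine ⟨fun i => (chains i).sup card, fun i => ?_, ?_⟩
  · have hn : 0 < n := by simpa using hf ∅ (empty_subset S) (by simp [StrictAntiOn])
    rw [Finset.sup_lt_iff hn]
    intro T hT
    exact hf T (mem_chains.1 hT).1 (mem_chains.1 hT).2.1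
  · rintro a i ⟨hi, hia⟩ j ⟨hj, hja⟩ hij
    by_contra! hlt
    have hij : i < j := hij.lt_of_ne (by rintro rfl; exact hlt.false)
    have hne : (chains i).Nonempty := ⟨{i}, mem_chains.2 (by simp [hi])⟩
    obtain ⟨T, hT, hTcard⟩ := exists_mem_eq_sup _ hne card
    obtain ⟨hTS, hanti, hiT, hmax⟩ := mem_chains.1 hT
    have hmax_lt : ∀ x ∈ T, x < j := fun x hx => (hmax hx).trans_lt hij
    have hlt_fi : ∀ x ∈ T, f j < f x := fun x hx =>
      hlt.trans_le (hanti.antitoneOn hx hiT (hmax hx))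
    have hinsert : insert j T ∈ chains j := by
      refine mem_chains.2 ⟨insert_subset hj hTS, ?_, mem_insert_self j T, ?_⟩
      · rw [coe_insert, strictAntiOn_insert_iff_of_forall_le fun x hx => (hmax_lt x hx).le]
        exact ⟨fun x hx _ => hlt_fi x hx, hanti⟩
      · exact fun x hx =>
          (forall_mem_insert j T (· ≤ j)).2 ⟨le_rfl, fun x hx => (hmax_lt x hx).le⟩ x hx
    have hcard := le_sup (f := card) hinsert
    rw [card_insert_of_notMem fun hjT => (hmax_lt j hjT).false, ← hTcard] at hcard
    dsimp only at hia hja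
    omega

-- The step function `g i` counts the pairs (colour, value) seen up to position `i`: between two
-- jumps of `g` the value of `f` is constant on each colour class.
theorem exists_monotone_card_image_fiber_le [DecidableEq β] {f : ι → β}
    (hf : ∀ T ⊆ S, StrictAntiOn f T → #T < n) (hD : #(S.image f) ≤ D) :
    ∃ g : ι → ℕ, Monotone g ∧ (∀ i, g i ≤ n * D) ∧
      ∀ v, #({i ∈ S | g i = v}.image f) ≤ n := by
  obtain ⟨c, hcn, hmono⟩ := exists_coloring_monotoneOn hf
  let seen (i : ι) : Finset (ℕ × β) := {j ∈ S | j ≤ i}.image fun j => (c j, f j)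
  have seen_mono : Monotone seen := fun i j hij =>
    image_subset_image (monotone_filter_right S fun _ _ hx => hx.trans hij)
  refine ⟨fun i => #(seen i), fun i j hij => card_le_card (seen_mono hij), fun i => ?_, fun v => ?_⟩
  · have hsub : seen i ⊆ range n ×ˢ S.image f := by
      refine image_subset_iff.2 fun j hj => mem_product.2 ⟨mem_range.2 (hcn j), ?_⟩
      exact mem_image_of_mem f (mem_filter.1 hj).1
    calc #(seen i) ≤ n * #(S.image f) := by simpa using card_le_card hsub
      _ ≤ n * D := by gcongr
  · have eq_of_le : ∀ i ∈ S, ∀ j ∈ S, #(seen i) = #(seen j) → i ≤ j → c i = c j → f i = f j := by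
      intro i hi j hj hseen hij hc
      have hmem : (c j, f j) ∈ seen i := by
        rw [eq_of_subset_of_card_le (seen_mono hij) hseen.ge]
        exact mem_image_of_mem _ (mem_filter.2 ⟨hj, le_rfl⟩)
      obtain ⟨k, hk, hkj⟩ := mem_image.1 hmem
      obtain ⟨hkS, hki⟩ := mem_filter.1 hk
      obtain ⟨hkc, hkf⟩ := Prod.mk.inj hkj
      refine le_antisymm (hmono (c j) ⟨hi, hc⟩ ⟨hj, rfl⟩ hij) ?_
      rw [← hkf]
      exact hmono (c j) ⟨hkS, hkc⟩ ⟨hi, hc⟩ hki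
    have hcolors : {i ∈ S | #(seen i) = v}.image c ⊆ range n :=
      image_subset_iff.2 fun i _ => mem_range.2 (hcn i)
    refine le_trans ?_ ((card_le_card hcolors).trans_eq (card_range n))
    refine card_image_le_card_image_of_forall_eq fun i hi j hj hc => ?_
    obtain ⟨hiS, hiv⟩ := mem_filter.1 hi
    obtain ⟨hjS, hjv⟩ := mem_filter.1 hj
    rcases le_total i j with hij | hji
    · exact eq_of_le i hiS j hjS (hiv.trans hjv.symm) hij hc
    · exact (eq_of_le j hjS i hiS (hjv.trans hiv.symm) hji hc.symm).symm

-- The sum of the two step functions is again a step function, so there are `O(n * D)` steps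
-- (rather than `(n * D) ^ 2`), each with at most `n ^ 2` pairs of values.
theorem card_image_prodMk_le [DecidableEq β] [DecidableEq γ] {f₁ : ι → β} {f₂ : ι → γ}
    (hf₁ : ∀ T ⊆ S, StrictAntiOn f₁ T → #T < n) (hf₂ : ∀ T ⊆ S, StrictAntiOn f₂ T → #T < n)
    (hD₁ : #(S.image f₁) ≤ D) (hD₂ : #(S.image f₂) ≤ D) :
    #(S.image fun i => (f₁ i, f₂ i)) ≤ D * (3 * n ^ 3) := by
  rcases S.eq_empty_or_nonempty with rfl | hS
  · simp
  obtain ⟨g₁, hg₁, hg₁D, hg₁n⟩ := exists_monotone_card_image_fiber_le hf₁ hD₁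
  obtain ⟨g₂, hg₂, hg₂D, hg₂n⟩ := exists_monotone_card_image_fiber_le hf₂ hD₂
  have hfiber : ∀ v ∈ S.image (g₁ + g₂),
      #({i ∈ S | (g₁ + g₂) i = v}.image fun i => (f₁ i, f₂ i)) ≤ n * n :=
    forall_mem_image.2 fun j _ => (card_image_prodMk_fiber_add_le hg₁ hg₂ j).trans
      (Nat.mul_le_mul (hg₁n _) (hg₂n _))
  have hsteps : #(S.image (g₁ + g₂)) ≤ 2 * (n * D) + 1 := by
    have hsub : S.image (g₁ + g₂) ⊆ range (2 * (n * D) + 1) := by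
      refine image_subset_iff.2 fun i _ => mem_range.2 ?_
      have h₁ := hg₁D i
      have h₂ := hg₂D i
      simp only [Pi.add_apply]
      omega
    exact (card_le_card hsub).trans_eq (card_range _)
  have hn : 0 < n := by simpa using hf₁ ∅ (empty_subset S) (by simp [StrictAntiOn])
  have hD : 0 < D := (hS.image f₁).card_pos.trans_le hD₁
  have hnD : 1 ≤ n * D := Nat.mul_pos hn hD
  calc #(S.image fun i => (f₁ i, f₂ i)) ≤ #(S.image (g₁ + g₂)) * (n * n) :=
        card_image_le_mul_of_card_image_fiber_le hfiber
    _ ≤ (2 * (n * D) + n * D) * (n * n) := by gcongr; omega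
    _ = D * (3 * n ^ 3) := by ring

end Coloring

section Window

variable {α : Type*} (w : ℕ → α)

/-- The factor of length `t` starting at position `p` of the sequence `w`. A finite word is read
as an initial segment of a sequence, so that positions need no bounds. -/
def window (p t : ℕ) : List α := (List.range t).map fun j => w (p + j)

@[simp]
theorem length_window (p t : ℕ) : (window w p t).length = t := by simp [window]

@[simp]
theorem getElem_window {p t j : ℕ} (hj : j < (window w p t).length) :
    (window w p t)[j] = w (p + j) := by simp [window]

theorem window_add (p s t : ℕ) : window w p (s + t) = window w p s ++ window w (p + s) t := by
  simp [window, List.range_add, Function.comp_def, add_assoc]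

theorem window_append_window {a b c : ℕ} (hab : a ≤ b) (hbc : b ≤ c) :
    window w a (b - a) ++ window w b (c - b) = window w a (c - a) := by
  obtain ⟨s, rfl⟩ := Nat.exists_eq_add_of_le hab
  obtain ⟨t, rfl⟩ := Nat.exists_eq_add_of_le hbc
  rw [add_assoc, Nat.add_sub_cancel_left, ← add_assoc, Nat.add_sub_cancel_left,
    add_assoc, Nat.add_sub_cancel_left, window_add]

theorem drop_window (p t a : ℕ) : (window w p t).drop a = window w (p + a) (t - a) :=
  List.ext_getElem (by simp) fun j _ _ => by simp [add_assoc]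

theorem window_getD_length (W : List α) (d : α) : window (W.getD · d) 0 W.length = W :=
  List.ext_getElem (by simp) fun j _ hj => by simp [hj]

theorem flatten_map_window {q : ℕ → ℕ} {n : ℕ} (hq : MonotoneOn q (Set.Iic n)) :
    ((List.range n).map fun k => window w (q k) (q (k + 1) - q k)).flatten =
      window w (q 0) (q n - q 0) := by
  induction n with
  | zero => simp [window]
  | succ n ih =>
    have h0n : q 0 ≤ q n := hq (by simp) (by simp) n.zero_le
    have hn : q n ≤ q (n + 1) := hq (by simp) (by simp) n.le_succ
    rw [List.range_succ, List.map_append, List.flatten_append,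
      ih (hq.mono (Set.Iic_subset_Iic.2 n.le_succ)), ← window_append_window w h0n hn]
    simp

theorem hasPeriod_window_iff {s e p : ℕ} :
    (window w s (e - s)).HasPeriod p ↔ ∀ m, s ≤ m → m + p < e → w m = w (m + p) := by
  rw [List.hasPeriod_iff_getElem?, length_window]
  constructor
  · intro h m hsm hme
    obtain ⟨j, rfl⟩ := Nat.exists_eq_add_of_le hsm
    have hj := h j (by omega)
    rw [List.getElem?_eq_getElem (by simp; omega), List.getElem?_eq_getElem (by simp; omega)] at hj
    simpa [add_assoc] using hj
  · intro h j hj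
    rw [List.getElem?_eq_getElem (by simp; omega), List.getElem?_eq_getElem (by simp; omega)]
    simpa [add_assoc] using h (s + j) (by omega) (by omega)

end Window

section Divisibility

variable {α : Type*} [LinearOrder α] {w : ℕ → α} {L M n : ℕ} {S T : Finset ℕ}

theorem append_lt_append_of_lt_of_not_prefix {u v : List α} (hlt : u < v) (hpre : ¬ u <+: v)
    (x y : List α) : u ++ x < v ++ y := by
  induction u generalizing v with
  | nil => exact absurd v.nil_prefix hpre
  | cons a u ih =>
    cases v with
    | nil => exact absurd hlt (List.not_lt_nil _)
    | cons b v =>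
      simp only [List.cons_append, List.cons_lt_cons_iff] at hlt ⊢
      refine hlt.imp_right fun ⟨hab, huv⟩ => ⟨hab, ih huv fun h => hpre ?_⟩
      rw [hab]
      exact (List.prefix_cons_inj b).2 h

theorem isNDivisible_of_cuts {cut : ℕ → ℕ} (hcut : StrictMonoOn cut (Set.Iic n))
    (hlt : ∀ k, k + 1 < n → window w (cut (k + 1)) (cut (k + 2) - cut (k + 1)) <
      window w (cut k) (cut (k + 1) - cut k)) :
    IsNDivisible n (window w 0 (cut n)) := by
  refine ⟨window w 0 (cut 0), (List.range n).map fun k => window w (cut k) (cut (k + 1) - cut k),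
    by simp, ?_, ?_, ?_⟩
  · simp only [List.mem_map, List.mem_range, forall_exists_index, and_imp]
    rintro _ k hk rfl
    rw [← List.length_pos_iff, length_window]
    exact Nat.sub_pos_of_lt (hcut hk.le hk k.lt_succ_self)
  · have h0n : cut 0 ≤ cut n := hcut.monotoneOn n.zero_le (le_refl n) n.zero_le
    rw [flatten_map_window w hcut.monotoneOn]
    exact (window_append_window w (cut 0).zero_le h0n).symm
  · refine List.isChain_iff_getElem.2 fun k hk => ?_
    simp only [List.length_map, List.length_range] at hk
    simpa using hlt k hk

-- Each window is extended to the right up to the next one. Since consecutive windows differ at a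
-- letter which both have, the extension does not affect their order.
theorem isNDivisible_of_windows {q t : Fin n → ℕ} (hpos : ∀ i, 0 < t i)
    (hdisj : ∀ i j, i < j → q i + t i ≤ q j) (hqL : ∀ i, q i + t i ≤ L)
    (hlt : ∀ i j, i < j → window w (q j) (t j) < window w (q i) (t i))
    (hpre : ∀ i j, i < j → ¬ window w (q j) (t j) <+: window w (q i) (t i)) :
    IsNDivisible n (window w 0 L) := by
  let cut (k : ℕ) : ℕ := if h : k < n then q ⟨k, h⟩ else L
  have cut_of_lt {k : ℕ} (hk : k < n) : cut k = q ⟨k, hk⟩ := dif_pos hk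
  have cut_n : cut n = L := dif_neg (lt_irrefl n)
  have add_le_cut {i j : ℕ} (hij : i < j) (hj : j ≤ n) :
      q ⟨i, hij.trans_le hj⟩ + t ⟨i, hij.trans_le hj⟩ ≤ cut j := by
    rcases hj.lt_or_eq with hjn | rfl
    · rw [cut_of_lt hjn]
      exact hdisj _ _ (Fin.mk_lt_mk.2 hij)
    · rw [cut_n]
      exact hqL _
  have piece_eq {k : ℕ} (hk : k < n) : window w (cut k) (cut (k + 1) - cut k) =
      window w (q ⟨k, hk⟩) (t ⟨k, hk⟩) ++ window w (q ⟨k, hk⟩ + t ⟨k, hk⟩)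
        (cut (k + 1) - (q ⟨k, hk⟩ + t ⟨k, hk⟩)) := by
    have h := add_le_cut k.lt_succ_self hk
    rw [cut_of_lt hk, ← window_append_window w (Nat.le_add_right _ _) h, Nat.add_sub_cancel_left]
  rw [← cut_n]
  refine isNDivisible_of_cuts (fun i _ j hj hij => ?_) fun k hk => ?_
  · have h := add_le_cut hij hj
    have ht := hpos ⟨i, hij.trans_le hj⟩
    rw [cut_of_lt (hij.trans_le hj)]
    omega
  · have hkk : (⟨k, k.lt_succ_self.trans hk⟩ : Fin n) < ⟨k + 1, hk⟩ := Fin.mk_lt_mk.2 k.lt_succ_self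
    rw [piece_eq hk, piece_eq (k.lt_succ_self.trans hk)]
    exact append_lt_append_of_lt_of_not_prefix (hlt _ _ hkk) (hpre _ _ hkk) _ _

/-- The blocks `[i, i + M)` with `i ∈ S` are pairwise disjoint and contained in `[0, L)`. -/
structure DisjointBlocks (L M : ℕ) (S : Finset ℕ) : Prop where
  add_le : ∀ i ∈ S, i + M ≤ L
  add_le_of_lt : ∀ i ∈ S, ∀ j ∈ S, i < j → i + M ≤ j

theorem DisjointBlocks.subset (hS : DisjointBlocks L M S) (hTS : T ⊆ S) : DisjointBlocks L M T where
  add_le i hi := hS.add_le i (hTS hi)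
  add_le_of_lt i hi j hj := hS.add_le_of_lt i (hTS hi) j (hTS hj)

theorem DisjointBlocks.isNDivisible (hT : DisjointBlocks L M T) (hcard : #T = n) {a t : Fin n → ℕ}
    (hpos : ∀ i, 0 < t i) (hat : ∀ i, a i + t i ≤ M)
    (hlt : ∀ i j, i < j → window w (T.orderEmbOfFin hcard j + a j) (t j) <
      window w (T.orderEmbOfFin hcard i + a i) (t i))
    (hpre : ∀ i j, i < j → ¬ window w (T.orderEmbOfFin hcard j + a j) (t j) <+:
      window w (T.orderEmbOfFin hcard i + a i) (t i)) :
    IsNDivisible n (window w 0 L) := by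
  have hmem (i : Fin n) : T.orderEmbOfFin hcard i ∈ T := T.orderEmbOfFin_mem hcard i
  refine isNDivisible_of_windows hpos (fun i j hij => ?_) (fun i => ?_) hlt hpre
  · have hblock := hT.add_le_of_lt _ (hmem i) _ (hmem j) ((T.orderEmbOfFin hcard).strictMono hij)
    have := hat i
    omega
  · have hblock := hT.add_le _ (hmem i)
    have := hat i
    omega

theorem DisjointBlocks.card_lt_of_strictAntiOn (hT : DisjointBlocks L M T)
    (hW : ¬ IsNDivisible n (window w 0 L)) {o t : ℕ} (ht : 0 < t) (hot : o + t ≤ M)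
    (hanti : StrictAntiOn (fun i => window w (i + o) t) T) : #T < n := by
  by_contra! hcard
  obtain ⟨R, hRT, hR⟩ := exists_subset_card_eq hcard
  have hlt : ∀ i j, i < j → window w (R.orderEmbOfFin hR j + o) t <
      window w (R.orderEmbOfFin hR i + o) t := fun i j hij =>
    hanti (hRT (R.orderEmbOfFin_mem hR i)) (hRT (R.orderEmbOfFin_mem hR j))
      ((R.orderEmbOfFin hR).strictMono hij)
  refine hW ((hT.subset hRT).isNDivisible hR (fun _ => ht) (fun _ => hot) hlt ?_)
  exact fun i j hij hpre => (hlt i j hij).ne (hpre.eq_of_length (by simp))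

theorem DisjointBlocks.card_image_window_le (hS : DisjointBlocks L M S)
    (hW : ¬ IsNDivisible n (window w 0 L)) {A : Finset α} (hA : ∀ i < L, w i ∈ A) {k o : ℕ}
    (ho : o + 2 ^ k ≤ M) :
    #(S.image fun i => window w (i + o) (2 ^ k)) ≤ #A * (3 * n ^ 3) ^ k := by
  induction k generalizing o with
  | zero =>
    have hsub : (S.image fun i => window w (i + o) (2 ^ 0)) ⊆ A.image fun a => [a] := by
      refine image_subset_iff.2 fun i hi => mem_image.2 ⟨w (i + o), hA _ ?_, by simp [window]⟩
      have := hS.add_le i hi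
      omega
    simpa using (card_le_card hsub).trans card_image_le
  | succ k ih =>
    rw [pow_succ, mul_two] at ho
    have hanti {o : ℕ} (ho : o + 2 ^ k ≤ M) (T : Finset ℕ) (hTS : T ⊆ S)
        (hT : StrictAntiOn (fun i => window w (i + o) (2 ^ k)) T) : #T < n :=
      (hS.subset hTS).card_lt_of_strictAntiOn hW (Nat.two_pow_pos k) ho hT
    have ho₂ : o + 2 ^ k + 2 ^ k ≤ M := by rwa [add_assoc]
    have ho₁ : o + 2 ^ k ≤ M := le_of_add_le_left ho₂
    have hpairs := card_image_prodMk_le (hanti ho₁) (hanti ho₂) (ih ho₁) (ih ho₂)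
    have hsplit : (S.image fun i => window w (i + o) (2 ^ (k + 1))) =
        (S.image fun i => (window w (i + o) (2 ^ k), window w (i + (o + 2 ^ k)) (2 ^ k))).image
          fun x => x.1 ++ x.2 := by
      simp only [image_image, Function.comp_def, pow_succ, mul_two, window_add, add_assoc]
    rw [hsplit, pow_succ, ← mul_assoc]
    exact card_image_le.trans hpairs

end Divisibility

section SuffixAperiodic

variable {α : Type*} {w : ℕ → α} {L M n : ℕ} {S T : Finset ℕ}

/-- No suffix of `X` obtained by deleting `a` letters has a period `p` with `a + p < n`. For
`n ≤ X.length` this says that the `n` longest suffixes of `X` are pairwise incomparable for the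
prefix order. -/
def SuffixAperiodic (n : ℕ) (X : List α) : Prop :=
  ∀ a p, 0 < p → a + p < n → ¬ (X.drop a).HasPeriod p

theorem hasPeriod_of_drop_prefix {X : List α} {p : ℕ} (h : X.drop p <+: X) : X.HasPeriod p := by
  rw [← List.prefix_append_right_inj (X.take p), List.take_append_drop] at h
  exact h

theorem SuffixAperiodic.not_drop_prefix_drop {X : List α} (hX : SuffixAperiodic n X)
    (hn : n ≤ X.length) {a b : ℕ} (hb : b < n) (hab : a ≠ b) :
    ¬ X.drop b <+: X.drop a := by
  intro hpre
  rcases hab.lt_or_gt with hlt | hlt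
  · refine hX a (b - a) (by omega) (by omega) (hasPeriod_of_drop_prefix ?_)
    rwa [List.drop_drop, Nat.add_sub_cancel' hlt.le]
  · have hlen := hpre.length_le
    simp only [List.length_drop] at hlen
    omega

theorem suffixAperiodic_window_iff {i : ℕ} : SuffixAperiodic n (window w i M) ↔
    ∀ a p, 0 < p → a + p < n → ¬ (window w (i + a) (i + M - (i + a))).HasPeriod p := by
  simp only [SuffixAperiodic, drop_window, Nat.add_sub_add_left]

variable [LinearOrder α]

-- Take from the `k`-th block its suffix of rank `k` in decreasing order.
theorem DisjointBlocks.card_lt_of_window_eq (hT : DisjointBlocks L M T)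
    (hW : ¬ IsNDivisible n (window w 0 L)) (hM : n ≤ M) {X : List α} (hX : SuffixAperiodic n X)
    (hTX : ∀ i ∈ T, window w i M = X) : #T < n := by
  by_contra! hcard
  obtain ⟨R, hRT, hR⟩ := exists_subset_card_eq hcard
  let suffix (a : Fin n) : List α := X.drop a
  let rank : Equiv.Perm (Fin n) := Fin.revPerm.trans (Tuple.sort suffix)
  have window_eq (i : Fin n) :
      window w (R.orderEmbOfFin hR i + rank i) (M - rank i) = suffix (rank i) := by
    rw [← drop_window, hTX _ (hRT (R.orderEmbOfFin_mem hR i))]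
  have hpre (i j : Fin n) (hij : i < j) : ¬ suffix (rank j) <+: suffix (rank i) := by
    have hlen : n ≤ X.length := by
      rwa [← hTX _ (hRT (R.orderEmbOfFin_mem hR i)), length_window]
    refine hX.not_drop_prefix_drop hlen (rank j).2 ?_
    exact Fin.val_ne_of_ne (rank.injective.ne hij.ne)
  have hlt (i j : Fin n) (hij : i < j) : suffix (rank j) < suffix (rank i) := by
    refine (Tuple.monotone_sort suffix (Fin.rev_le_rev.2 hij.le)).lt_of_ne fun h => ?_
    have heq : suffix (rank j) = suffix (rank i) := h
    exact hpre i j hij (heq ▸ List.prefix_rfl)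
  refine hW ((hT.subset hRT).isNDivisible hR (a := fun i => rank i) (t := fun i => M - rank i)
    (fun i => ?_) (fun i => ?_) (fun i j hij => ?_) fun i j hij => ?_)
  · exact Nat.sub_pos_of_lt ((rank i).2.trans_le hM)
  · exact (Nat.add_sub_cancel' ((rank i).2.le.trans hM)).le
  · simpa only [window_eq] using hlt i j hij
  · simpa only [window_eq] using hpre i j hij

variable {A : Finset α} {k : ℕ}

theorem DisjointBlocks.card_le_of_suffixAperiodic (hS : DisjointBlocks L (2 ^ k) S)
    (hW : ¬ IsNDivisible n (window w 0 L)) (hA : ∀ i < L, w i ∈ A) (hk : n ≤ 2 ^ k)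
    (hX : ∀ i ∈ S, SuffixAperiodic n (window w i (2 ^ k))) :
    #S ≤ n * (#A * (3 * n ^ 3) ^ k) := by
  have hfiber : ∀ X ∈ S.image fun i => window w i (2 ^ k), #{i ∈ S | window w i (2 ^ k) = X} ≤ n :=
    forall_mem_image.2 fun i hi => ((hS.subset (filter_subset _ S)).card_lt_of_window_eq hW hk
      (hX i hi) fun j hj => (mem_filter.1 hj).2).le
  have hvalues := hS.card_image_window_le hW hA (o := 0) (Nat.zero_add _).le
  exact (card_le_mul_card_image S n hfiber).trans (Nat.mul_le_mul_left n hvalues)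

theorem card_le_of_suffixAperiodic (hW : ¬ IsNDivisible n (window w 0 L))
    (hA : ∀ i < L, w i ∈ A) (hk : n ≤ 2 ^ k) (hSL : ∀ i ∈ S, i + 2 ^ k ≤ L)
    (hX : ∀ i ∈ S, SuffixAperiodic n (window w i (2 ^ k))) :
    #S ≤ 2 ^ k * (n * (#A * (3 * n ^ 3) ^ k)) := by
  have hclass (r : ℕ) : DisjointBlocks L (2 ^ k) {i ∈ S | i % 2 ^ k = r} := by
    refine ⟨fun i hi => hSL i (mem_filter.1 hi).1, fun i hi j hj hij => ?_⟩
    have hmod : i ≡ j [MOD 2 ^ k] := (mem_filter.1 hi).2.trans (mem_filter.1 hj).2.symm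
    exact hmod.add_le_of_lt hij
  have hresidues : ∀ i ∈ S, i % 2 ^ k ∈ range (2 ^ k) := fun i _ =>
    mem_range.2 (Nat.mod_lt i (Nat.two_pow_pos k))
  have hcount := card_le_mul_card_image_of_maps_to hresidues _ fun r _ =>
    (hclass r).card_le_of_suffixAperiodic hW hA hk fun i hi => hX i (mem_filter.1 hi).1
  rwa [card_range, mul_comm] at hcount

end SuffixAperiodic

section Height

variable {α : Type*} {n r s : ℕ} {X Y : List α}

/-- `X` is a product of at most `r` powers of words of length less than `n`; the pair `(u, k)`
stands for the power `u ^ k`. -/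
def HeightLE (n r : ℕ) (X : List α) : Prop :=
  ∃ ps : List (List α × ℕ), ps.length ≤ r ∧ (∀ x ∈ ps, x.1.length < n) ∧
    X = (ps.map fun x => (List.replicate x.2 x.1).flatten).flatten

theorem HeightLE.mono (hX : HeightLE n r X) (hrs : r ≤ s) : HeightLE n s X := by
  obtain ⟨ps, hlen, hps, rfl⟩ := hX
  exact ⟨ps, hlen.trans hrs, hps, rfl⟩

theorem HeightLE.append (hX : HeightLE n r X) (hY : HeightLE n s Y) :
    HeightLE n (r + s) (X ++ Y) := by
  obtain ⟨ps, hps_len, hps, rfl⟩ := hX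
  obtain ⟨qs, hqs_len, hqs, rfl⟩ := hY
  refine ⟨ps ++ qs, ?_, List.forall_mem_append.2 ⟨hps, hqs⟩, by simp⟩
  simpa using Nat.add_le_add hps_len hqs_len

theorem HeightLE.nil : HeightLE n 0 ([] : List α) := ⟨[], by simp⟩

theorem heightLE_one_of_length_lt (hX : X.length < n) : HeightLE n 1 X := ⟨[(X, 1)], by simpa⟩

theorem heightLE_length (hn : 2 ≤ n) (X : List α) : HeightLE n X.length X := by
  induction X with
  | nil => exact .nil
  | cons a X ih =>
    rw [List.length_cons, add_comm]
    exact (heightLE_one_of_length_lt (X := [a]) (by simpa)).append ih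

theorem take_mul_eq_flatten_replicate {p m : ℕ} (hX : X.HasPeriod p) (hm : p * m ≤ X.length) :
    X.take (p * m) = (List.replicate m (X.take p)).flatten := by
  induction m with
  | zero => simp
  | succ m ih =>
    rw [mul_add, mul_one] at hm
    have hdrop : (X.drop p).take (p * m) = X.take (p * m) := by
      rw [List.prefix_iff_eq_take.1 (hX.drop_prefix p), List.take_take, List.length_drop,
        min_eq_left (by omega)]
    rw [mul_add, mul_one, add_comm, List.take_add, hdrop, ih (by omega), List.replicate_succ,
      List.flatten_cons]

theorem heightLE_two_of_hasPeriod {p : ℕ} (hp : 0 < p) (hpn : p < n) (hX : X.HasPeriod p) :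
    HeightLE n 2 X := by
  have hpow : HeightLE n 1 (X.take (p * (X.length / p))) := by
    rw [take_mul_eq_flatten_replicate hX (Nat.mul_div_le _ _)]
    exact ⟨[(X.take p, X.length / p)], by simp [hpn]⟩
  have hrest : HeightLE n 1 (X.drop (p * (X.length / p))) := by
    refine heightLE_one_of_length_lt ?_
    rw [List.length_drop, ← Nat.mod_eq_sub_mul_div]
    exact (Nat.mod_lt _ hp).trans hpn
  simpa using hpow.append hrest

theorem HeightLE.exists_fin (hX : HeightLE n r X) :
    ∃ m ≤ r, ∃ (us : Fin m → List α) (ks : Fin m → ℕ), (∀ i, (us i).length < n) ∧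
      X = (List.ofFn fun i => (List.replicate (ks i) (us i)).flatten).flatten := by
  obtain ⟨ps, hlen, hps, rfl⟩ := hX
  refine ⟨ps.length, hlen, fun i => (ps.get i).1, fun i => (ps.get i).2,
    fun i => hps _ (ps.get_mem i), ?_⟩
  congr 1
  exact List.ext_getElem (by simp) fun i _ _ => by simp

end Height

section Decomposition

variable {α : Type*} {w : ℕ → α} {L M n : ℕ}

theorem exists_maximal_hasPeriod_window {p s e₀ : ℕ} (he₀ : e₀ ≤ L)
    (hper : (window w s (e₀ - s)).HasPeriod p) :
    ∃ e, e₀ ≤ e ∧ e ≤ L ∧ (window w s (e - s)).HasPeriod p ∧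
      (e = L ∨ ¬ (window w s (e + 1 - s)).HasPeriod p) := by
  classical
  let P (e : ℕ) : Prop := (window w s (e - s)).HasPeriod p
  refine ⟨Nat.findGreatest P L, Nat.le_findGreatest he₀ hper, Nat.findGreatest_le L,
    Nat.findGreatest_spec (P := P) he₀ hper,
    (Nat.findGreatest_le L).eq_or_lt.imp_right fun hlt => ?_⟩
  exact Nat.findGreatest_is_greatest (P := P) (Nat.lt_succ_self _) hlt

-- As in the Fine–Wilf theorem: `w (e - p) = w (e - p - q) = w (e - q) = w e`.
theorem hasPeriod_window_succ {p q s s' e : ℕ} (hp : (window w s (e - s)).HasPeriod p)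
    (hq : (window w s' (e + 1 - s')).HasPeriod q) (hq₀ : 0 < q) (hs : s + p + q ≤ e)
    (hs' : s' + p + q ≤ e) : (window w s (e + 1 - s)).HasPeriod p := by
  rw [hasPeriod_window_iff] at hp hq ⊢
  intro m hsm hme
  rcases (Nat.lt_succ_iff.1 hme).lt_or_eq with hlt | rfl
  · exact hp m hsm hlt
  · obtain ⟨j, rfl⟩ := Nat.exists_eq_add_of_le' (show q ≤ m by omega)
    calc w (j + q) = w j := (hq j (by omega) (by omega)).symm
      _ = w (j + p) := hp j (by omega) (by omega)
      _ = w (j + p + q) := hq (j + p) (by omega) (by omega)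
      _ = w (j + q + p) := by rw [add_right_comm]

-- If the block at `i` is not aperiodic, follow its period as far as possible: the block starting
-- shortly before the break then has no short period.
theorem exists_heightLE_window_suffixAperiodic (hn : 2 ≤ n) (hM : 3 * n ≤ M) {i : ℕ}
    (hi : i + M ≤ L) :
    ∃ e, i ≤ e ∧ e ≤ L ∧ HeightLE n (n + 2) (window w i (e - i)) ∧
      (L < e + M ∨ SuffixAperiodic n (window w e M)) := by
  by_cases hX : SuffixAperiodic n (window w i M)
  · refine ⟨i, le_rfl, by omega, ?_, .inr hX⟩
    simpa [window] using (HeightLE.nil (α := α)).mono (Nat.zero_le (n + 2))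
  simp only [suffixAperiodic_window_iff, not_forall, not_not] at hX
  obtain ⟨a, p, hp, hap, hper⟩ := hX
  obtain ⟨e, hMe, heL, hper, hbreak⟩ := exists_maximal_hasPeriod_window hi hper
  have hper' : (window w (i + a) (e - 2 * n - (i + a))).HasPeriod p := by
    rw [hasPeriod_window_iff] at hper ⊢
    exact fun m hm hme => hper m hm (by omega)
  refine ⟨e - 2 * n, by omega, by omega, ?_, hbreak.imp (by omega) fun hbreak => ?_⟩
  · rw [← window_append_window w (show i ≤ i + a by omega) (by omega), Nat.add_sub_cancel_left]
    refine HeightLE.append (.mono (heightLE_length hn _) ?_)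
      (heightLE_two_of_hasPeriod hp (by omega) hper')
    rw [length_window]
    omega
  · rw [suffixAperiodic_window_iff]
    intro b q hq hbq hper_q
    have hper_q : (window w (e - 2 * n + b) (e + 1 - (e - 2 * n + b))).HasPeriod q := by
      rw [hasPeriod_window_iff] at hper_q ⊢
      exact fun m hm hme => hper_q m hm (by omega)
    exact hbreak (hasPeriod_window_succ hper hper_q hq (by omega) (by omega))

theorem heightLE_window_of_forall_suffixAperiodic_mem (hn : 2 ≤ n) (hM : 3 * n ≤ M)
    {S : Finset ℕ} {i : ℕ} (hi : i ≤ L)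
    (hS : ∀ j, i ≤ j → j + M ≤ L → SuffixAperiodic n (window w j M) → j ∈ S) :
    HeightLE n ((n + 3) * #S + (M + n + 2)) (window w i (L - i)) := by
  induction S using Finset.strongInduction generalizing i with
  | H S ih =>
    have hletters {e : ℕ} (he : L < e + M) : HeightLE n M (window w e (L - e)) :=
      (heightLE_length hn _).mono (by rw [length_window]; omega)
    rcases lt_or_ge L (i + M) with hiM | hiM
    · exact (hletters hiM).mono (by omega)
    obtain ⟨e, hie, heL, hhead, htail⟩ := exists_heightLE_window_suffixAperiodic (w := w) hn hM hiM
    rw [← window_append_window w hie heL]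
    rcases lt_or_ge L (e + M) with heM | heM
    · exact (hhead.append (hletters heM)).mono (by omega)
    · have heS : e ∈ S := hS e hie heM (htail.resolve_left heM.not_gt)
      have hrest := ih (S.erase e) (erase_ssubset heS) (i := e + 1) (by omega) fun j hj hjL hjX =>
        mem_erase.2 ⟨by omega, hS j (by omega) hjL hjX⟩
      have hletter : HeightLE n 1 (window w e (e + 1 - e)) :=
        heightLE_one_of_length_lt (by rw [length_window]; omega)
      rw [← window_append_window w (Nat.le_add_right e 1) (by omega)]
      refine (hhead.append (hletter.append hrest)).mono ?_
      rw [← card_erase_add_one heS]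
      linarith

theorem heightLE_of_not_isNDivisible [LinearOrder α] {k : ℕ} (hn : 2 ≤ n) (hk : 3 * n ≤ 2 ^ k)
    {W : List α} (hW : ¬ IsNDivisible n W) :
    HeightLE n ((n + 3) * (2 ^ k * (n * (#W.toFinset * (3 * n ^ 3) ^ k))) + (2 ^ k + n + 2)) W := by
  classical
  rcases W with _ | ⟨d, W'⟩
  · exact HeightLE.nil.mono (Nat.zero_le _)
  set W := d :: W'
  let w : ℕ → α := (W.getD · d)
  have hw : window w 0 W.length = W := window_getD_length W d
  have hletters : ∀ i < W.length, w i ∈ W.toFinset := fun i hi => by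
    simp only [w, List.getD_eq_getElem _ _ hi, List.mem_toFinset, List.getElem_mem]
  let S : Finset ℕ :=
    {i ∈ range (W.length + 1) | i + 2 ^ k ≤ W.length ∧ SuffixAperiodic n (window w i (2 ^ k))}
  have hS : #S ≤ 2 ^ k * (n * (#W.toFinset * (3 * n ^ 3) ^ k)) :=
    card_le_of_suffixAperiodic (hw.symm ▸ hW) hletters (by omega)
      (fun i hi => (mem_filter.1 hi).2.1) fun i hi => (mem_filter.1 hi).2.2
  have hheight := heightLE_window_of_forall_suffixAperiodic_mem (w := w) hn hk W.length.zero_le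
    (S := S) fun j _ hj hjX => mem_filter.2 ⟨mem_range.2 (by omega), hj, hjX⟩
  rw [Nat.sub_zero, hw] at hheight
  exact hheight.mono (by gcongr)

end Decomposition

section Arithmetic

variable {l n : ℕ}

theorem three_mul_le_two_pow_log (n : ℕ) : 3 * n ≤ 2 ^ (Nat.log 2 n + 3) := by
  have hlog : n < 2 ^ (Nat.log 2 n + 1) := Nat.lt_pow_succ_log_self Nat.one_lt_two n
  rw [show Nat.log 2 n + 3 = Nat.log 2 n + 1 + 2 from rfl, pow_add]
  omega

theorem two_pow_log_le (hn : n ≠ 0) : 2 ^ (Nat.log 2 n + 3) ≤ 8 * n := by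
  have hlog : 2 ^ Nat.log 2 n ≤ n := Nat.pow_log_le_self 2 hn
  rw [pow_add]
  omega

theorem three_mul_cube_pow_log_le (hn : n ≠ 0) :
    (3 * n ^ 3) ^ (Nat.log 2 n + 3) ≤ 64 * n ^ (11 + 3 * Nat.log 2 n) := by
  have hthree : 3 ^ (Nat.log 2 n + 3) ≤ 64 * n ^ 2 :=
    calc 3 ^ (Nat.log 2 n + 3) ≤ (2 ^ 2) ^ (Nat.log 2 n + 3) := by gcongr; norm_num
      _ = (2 ^ (Nat.log 2 n + 3)) ^ 2 := pow_right_comm 2 2 _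
      _ ≤ (8 * n) ^ 2 := by gcongr; exact two_pow_log_le hn
      _ = 64 * n ^ 2 := by ring
  calc (3 * n ^ 3) ^ (Nat.log 2 n + 3) = 3 ^ (Nat.log 2 n + 3) * (n ^ 3) ^ (Nat.log 2 n + 3) :=
        mul_pow _ _ _
    _ ≤ 64 * n ^ 2 * (n ^ 3) ^ (Nat.log 2 n + 3) := by gcongr
    _ = 64 * n ^ (11 + 3 * Nat.log 2 n) := by ring

theorem height_bound_le_two_pow_mul (hl : l ≠ 0) (hn : 2 ≤ n) :
    (n + 3) * (2 ^ (Nat.log 2 n + 3) * (n * (l * (3 * n ^ 3) ^ (Nat.log 2 n + 3)))) +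
      (2 ^ (Nat.log 2 n + 3) + n + 2) ≤ 2 ^ 11 * l * n ^ (14 + 3 * Nat.log 2 n) := by
  have hn₀ : n ≠ 0 := by omega
  have hpow := two_pow_log_le hn₀
  have hle : n ≤ l * n ^ (14 + 3 * Nat.log 2 n) :=
    (Nat.le_self_pow (by omega) n).trans (Nat.le_mul_of_pos_left _ (Nat.pos_of_ne_zero hl))
  calc (n + 3) * (2 ^ (Nat.log 2 n + 3) * (n * (l * (3 * n ^ 3) ^ (Nat.log 2 n + 3)))) +
        (2 ^ (Nat.log 2 n + 3) + n + 2)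
      ≤ 3 * n * (8 * n * (n * (l * (64 * n ^ (11 + 3 * Nat.log 2 n))))) + 10 * n := by
        gcongr ?_ * (?_ * (n * (l * ?_))) + ?_
        · omega
        · exact three_mul_cube_pow_log_le hn₀
        · omega
    _ = 1536 * (l * n ^ (14 + 3 * Nat.log 2 n)) + 10 * n := by ring
    _ ≤ 2 ^ 11 * l * n ^ (14 + 3 * Nat.log 2 n) := by
        rw [mul_assoc (2 ^ 11)]
        omega

theorem natLog_two_le_two_mul_logb_three (hn : n ≠ 0) :
    (Nat.log 2 n : ℝ) ≤ 2 * Real.logb 3 n := by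
  have hpow : (2 : ℝ) ^ Nat.log 2 n ≤ n := mod_cast Nat.pow_log_le_self 2 hn
  have hlog : Nat.log 2 n * Real.logb 3 2 ≤ Real.logb 3 n := by
    rw [← Real.logb_pow]
    exact Real.logb_le_logb_of_le (by norm_num) (by positivity) hpow
  have htwo : 1 / 2 ≤ Real.logb 3 2 := by
    rw [Real.le_logb_iff_rpow_le (by norm_num) (by norm_num), ← Real.sqrt_eq_rpow,
      Real.sqrt_le_left (by norm_num)]
    norm_num
  nlinarith [(Nat.log 2 n).cast_nonneg (α := ℝ)]

theorem two_pow_mul_pow_le_rpow (l : ℕ) (hn : n ≠ 0) :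
    ((2 ^ 11 * l * n ^ (14 + 3 * Nat.log 2 n) : ℕ) : ℝ) ≤ (4 : ℝ) ^ (21 * Real.logb 3 4 + 17) * l *
      (n : ℝ) ^ (30 * Real.logb 3 4 + 10 + 12 * Real.logb 3 (n : ℝ)) := by
  have hfour : 1 ≤ Real.logb 3 4 := by
    rw [Real.le_logb_iff_rpow_le (by norm_num) (by norm_num)]
    norm_num
  have hlog := natLog_two_le_two_mul_logb_three hn
  have hone : (1 : ℝ) ≤ n := mod_cast Nat.one_le_iff_ne_zero.2 hn
  simp only [Nat.cast_mul, Nat.cast_pow, Nat.cast_ofNat]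
  gcongr ?_ * _ * ?_
  · calc (2 : ℝ) ^ 11 ≤ (4 : ℝ) ^ (17 : ℝ) := by norm_num
      _ ≤ (4 : ℝ) ^ (21 * Real.logb 3 4 + 17) :=
        Real.rpow_le_rpow_of_exponent_le (by norm_num) (by linarith)
  · rw [← Real.rpow_natCast]
    refine Real.rpow_le_rpow_of_exponent_le hone ?_
    push_cast
    linarith

end Arithmetic

theorem heightLE_two_pow_mul_of_not_isNDivisible {α : Type*} [LinearOrder α] {n : ℕ} (hn : 2 ≤ n)
    {W : List α} (hW : ¬ IsNDivisible n W) :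
    HeightLE n (2 ^ 11 * #W.toFinset * n ^ (14 + 3 * Nat.log 2 n)) W := by
  rcases eq_or_ne W [] with rfl | hne
  · exact HeightLE.nil.mono (Nat.zero_le _)
  · have hcard : #W.toFinset ≠ 0 := by simpa using hne
    exact (heightLE_of_not_isNDivisible hn (three_mul_le_two_pow_log n) hW).mono
      (height_bound_le_two_pow_mul hcard hn)

end Shirshov

theorem stmt_17_general {α : Type*} [LinearOrder α] (n : ℕ) (hn : 2 ≤ n) (W : List α)
    (hW : ¬ IsNDivisible n W) :
    ∃ r : ℕ, (r : ℝ) ≤ (4 : ℝ) ^ (21 * Real.logb 3 4 + 17) * W.toFinset.card *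
        (n : ℝ) ^ (30 * Real.logb 3 4 + 10 + 12 * Real.logb 3 (n : ℝ)) ∧
      ∃ (us : Fin r → List α) (ks : Fin r → ℕ),
        (∀ i, (us i).length < n) ∧
        W = (List.ofFn fun i => (List.replicate (ks i) (us i)).flatten).flatten := by
  obtain ⟨r, hr, hpowers⟩ := (Shirshov.heightLE_two_pow_mul_of_not_isNDivisible hn hW).exists_fin
  exact ⟨r, (Nat.cast_le.2 hr).trans (Shirshov.two_pow_mul_pow_le_rpow _ (by omega)), hpowers⟩

/-- Main theorem: the set of non-`n`-divisible words over an `l`-letter alphabet has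
height at most `Φ(n,l) = 4^(21·log₃4+17) · l · n^(30·log₃4+10+12·log₃ n)` over the set of
words of length less than `n`: every non-`n`-divisible word is a product of at most
`Φ(n,l)` powers of words of length `< n`. -/
theorem stmt_17 (l n : ℕ) (hl : 1 ≤ l) (hn : 2 ≤ n) (W : List (Fin l))
    (hW : ¬ IsNDivisible n W) :
    ∃ r : ℕ, (r : ℝ) ≤ (4 : ℝ) ^ (21 * Real.logb 3 4 + 17) * l *
        (n : ℝ) ^ (30 * Real.logb 3 4 + 10 + 12 * Real.logb 3 (n : ℝ)) ∧
      ∃ (us : Fin r → List (Fin l)) (ks : Fin r → ℕ),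
        (∀ i, (us i).length < n) ∧
        W = (List.ofFn fun i => (List.replicate (ks i) (us i)).flatten).flatten := by
  obtain ⟨r, hr, hpowers⟩ := stmt_17_general n hn W hW
  have hcard : W.toFinset.card ≤ l := by simpa using W.toFinset.card_le_univ
  exact ⟨r, hr.trans (by gcongr), hpowers⟩
end
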